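/- arXiv:2006.04735 — 2 statements merged into one kernel-verified Lean document; each statement's English description precedes it below -/
import Mathlib

section
/- Suppose f(·;z) is H-smooth and convex for every z, each F_m is λ-strongly convex with λ ≥ 0, and E_{z∼D^m}‖∇f(x*;z) − ∇F_m(x*)‖² ≤ σ_*² for all m. Consider one simultaneous stochastic-gradient step: each machine m holds an iterate x_t^m, draws z_t^m ∼ D^m independently, and the averaged iterate evolves as x̄_{t+1} = x̄_t − (η_t/M)·Σ_{m=1}^M ∇f(x_t^m; z_t^m), where x̄_t = (1/M)·Σ_m x_t^m. Then for any stepsize η_t ≤ 1/(10H): E[F(x̄_t) − F*] ≤ (1/η_t − λ)·E‖x̄_t − x*‖² − (1/η_t)·E‖x̄_{t+1} − x*‖² + 3σ_*²η_t/M + (2H/M)·Σ_{m=1}^M E‖x̄_t − x_t^m‖². -/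
/-!
Fix the iterates `x m` and average over the samples only. Expanding
`‖x̄ - x⋆ - η (1/M) ∑ g_m‖²`, where `g_m` is the gradient sampled by machine `m`, leaves two terms.

* The cross term `-2η (1/M) ∑ ⟪∇F_m(x_m), x̄ - x⋆⟫` is bounded by splitting
  `x̄ - x⋆ = (x̄ - x_m) + (x_m - x⋆)`: smoothness of `F_m` handles the first part, strong convexity
  the second, and Jensen turns `(1/M) ∑ ‖x_m - x⋆‖²` into `‖x̄ - x⋆‖²`.
* The quadratic term is split at `x̄` and at `x⋆` (`sq_norm_mean_split`) into a drift part,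
  controlled by Lipschitz gradients; a suboptimality part, controlled by the Bregman bound
  `sq_norm_grad_sub_le`, whose linear terms cancel on average because `∇F(x⋆) = 0`; and centred
  noise at the optimum, whose second moment over independent machines is additive
  (`integral_sq_norm_sum`) and so gains the factor `1/M`. See `integral_sq_norm_step_le`.

With `ηH ≤ 1/10` the suboptimality part is absorbed (`step_progress_fixed`), and integrating over
the iterates gives the theorem.

Differentiability of the losses and square-integrability of the noise at `x⋆` are not hypotheses.
The first is never needed, since the quadratic upper model and convexity already make `gradient` a
subgradient (`convex_lower_bound`). The second matters because the Bochner integral in the variance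
bound would be `0` for a noise without second moment. It follows from square-integrability of the
new iterate: for one generic value of the iterates the sum of the sampled gradients is in `L²`,
hence each summand is (`memLp_of_integrable_sq_norm_sum`), and Lipschitz gradients transport this
from `x_m` to `x⋆` (`memLp_grad_of_memLp`).
-/

open MeasureTheory Finset
open scoped RealInnerProductSpace

/-! ### Convex smooth functions -/

section Smooth

variable {E : Type*} [NormedAddCommGroup E] [InnerProductSpace ℝ E]

/-- First-order convexity inequality. No differentiability is assumed: the quadratic upper model
with slope `G x` already makes `G x` a subgradient at `x`. -/
lemma convex_lower_bound {H : ℝ} {φ : E → ℝ} {G : E → E}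
    (hs : ∀ x y, φ y ≤ φ x + ⟪G x, y - x⟫ + H / 2 * ‖x - y‖ ^ 2)
    (hc : ConvexOn ℝ Set.univ φ) (x y : E) : φ x + ⟪G x, y - x⟫ ≤ φ y := by
  -- `x` lies between `y` and `x - t • (y - x)`; bound `φ` at the latter point and let `t → 0`.
  have key : ∀ t : ℝ, 0 < t → φ x + ⟪G x, y - x⟫ ≤ φ y + t * (H / 2 * ‖y - x‖ ^ 2) := by
    intro t ht
    have h1 := hs x (x - t • (y - x))
    have e1 : x - t • (y - x) - x = -(t • (y - x)) := by abel
    have e2 : x - (x - t • (y - x)) = t • (y - x) := by abel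
    rw [e1, e2, inner_neg_right, real_inner_smul_right, norm_smul, mul_pow,
      Real.norm_eq_abs, sq_abs] at h1
    have h2 := hc.2 (Set.mem_univ y) (Set.mem_univ (x - t • (y - x)))
      (show 0 ≤ t / (1 + t) by positivity) (show 0 ≤ 1 / (1 + t) by positivity)
      (by field_simp; ring)
    have e3 : (t / (1 + t)) • y + (1 / (1 + t)) • (x - t • (y - x)) = x := by
      match_scalars <;> field_simp <;> ring
    rw [e3] at h2
    simp only [smul_eq_mul] at h2
    have h3 : (1 + t) * φ x ≤ t * φ y + φ (x - t • (y - x)) := by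
      have := mul_le_mul_of_nonneg_left h2 (show 0 ≤ 1 + t by positivity)
      calc _ ≤ _ := this
        _ = _ := by field_simp
    have h4 : t * (φ x + ⟪G x, y - x⟫) ≤ t * (φ y + t * (H / 2 * ‖y - x‖ ^ 2)) := by
      nlinarith
    exact le_of_mul_le_mul_left h4 ht
  refine le_of_forall_pos_le_add fun ε hε => ?_
  set K := H / 2 * ‖y - x‖ ^ 2
  have hK : 0 < |K| + 1 := by positivity
  have h := key (ε / (|K| + 1)) (by positivity)
  have : ε / (|K| + 1) * K ≤ ε := by
    rw [div_mul_eq_mul_div, div_le_iff₀ hK]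
    nlinarith [le_abs_self K]
  linarith

/-- Gradient differences of a smooth convex function are controlled by its Bregman divergence. -/
lemma sq_norm_grad_sub_le {H : ℝ} (hH : 0 < H) {φ : E → ℝ} {G : E → E}
    (hs : ∀ x y, φ y ≤ φ x + ⟪G x, y - x⟫ + H / 2 * ‖x - y‖ ^ 2)
    (hc : ConvexOn ℝ Set.univ φ) (x y : E) :
    ‖G x - G y‖ ^ 2 ≤ 2 * H * (φ x - φ y - ⟪G y, x - y⟫) := by
  -- Compare the upper model at `x` with the lower model at `y` after a gradient step from `x`.
  have h1 := hs x (x - H⁻¹ • (G x - G y))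
  have h2 := convex_lower_bound hs hc y (x - H⁻¹ • (G x - G y))
  have e1 : x - H⁻¹ • (G x - G y) - x = -(H⁻¹ • (G x - G y)) := by abel
  have e2 : x - (x - H⁻¹ • (G x - G y)) = H⁻¹ • (G x - G y) := by abel
  have e3 : x - H⁻¹ • (G x - G y) - y = (x - y) - H⁻¹ • (G x - G y) := by abel
  rw [e1, e2, inner_neg_right, real_inner_smul_right, norm_smul, mul_pow,
      Real.norm_eq_abs, sq_abs] at h1
  rw [e3, inner_sub_right, real_inner_smul_right] at h2
  have h3 : ⟪G x, G x - G y⟫ - ⟪G y, G x - G y⟫ = ‖G x - G y‖ ^ 2 := by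
    rw [← inner_sub_left, real_inner_self_eq_norm_sq]
  have h4 : H / 2 * (H⁻¹ ^ 2 * ‖G x - G y‖ ^ 2) = H⁻¹ * ‖G x - G y‖ ^ 2 / 2 := by
    field_simp
  have h5 : H⁻¹ * ‖G x - G y‖ ^ 2 / 2 ≤ φ x - φ y - ⟪G y, x - y⟫ := by
    have h6 : H⁻¹ * ⟪G x, G x - G y⟫ - H⁻¹ * ⟪G y, G x - G y⟫ = H⁻¹ * ‖G x - G y‖ ^ 2 := by
      rw [← h3, mul_sub]
    linarith
  have h6 := mul_le_mul_of_nonneg_left h5 (show 0 ≤ 2 * H by positivity)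
  calc _ = 2 * H * (H⁻¹ * ‖G x - G y‖ ^ 2 / 2) := by field_simp
    _ ≤ _ := h6

lemma sq_norm_grad_sub_le_sq {H : ℝ} (hH : 0 < H) {φ : E → ℝ} {G : E → E}
    (hs : ∀ x y, φ y ≤ φ x + ⟪G x, y - x⟫ + H / 2 * ‖x - y‖ ^ 2)
    (hc : ConvexOn ℝ Set.univ φ) (x y : E) :
    ‖G x - G y‖ ^ 2 ≤ H ^ 2 * ‖x - y‖ ^ 2 := by
  have h1 := sq_norm_grad_sub_le hH hs hc x y
  have h2 := hs y x
  rw [norm_sub_rev y x] at h2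
  nlinarith

lemma continuous_grad {H : ℝ} (hH : 0 < H) {φ : E → ℝ} {G : E → E}
    (hs : ∀ x y, φ y ≤ φ x + ⟪G x, y - x⟫ + H / 2 * ‖x - y‖ ^ 2)
    (hc : ConvexOn ℝ Set.univ φ) : Continuous G := by
  refine (LipschitzWith.of_dist_le_mul (K := ⟨H, hH.le⟩) fun x y => ?_).continuous
  rw [dist_eq_norm, dist_eq_norm]
  refine le_of_sq_le_sq ?_ (by positivity)
  have := sq_norm_grad_sub_le_sq hH hs hc x y
  calc _ ≤ _ := this
    _ = _ := by rw [mul_pow]; rfl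

/-- The slope of a quadratic upper model vanishes at a global minimizer. -/
lemma slope_eq_zero_of_min {H : ℝ} (hH : 0 < H) {φ : E → ℝ} {x v : E}
    (hs : ∀ y, φ y ≤ φ x + ⟪v, y - x⟫ + H / 2 * ‖x - y‖ ^ 2) (hmin : ∀ y, φ x ≤ φ y) :
    v = 0 := by
  have h1 := (hmin _).trans (hs (x - H⁻¹ • v))
  have e1 : x - H⁻¹ • v - x = -(H⁻¹ • v) := by abel
  have e2 : x - (x - H⁻¹ • v) = H⁻¹ • v := by abel
  rw [e1, e2, inner_neg_right, real_inner_smul_right, norm_smul, mul_pow,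
    Real.norm_eq_abs, sq_abs, real_inner_self_eq_norm_sq] at h1
  have h4 : H / 2 * (H⁻¹ ^ 2 * ‖v‖ ^ 2) = H⁻¹ * ‖v‖ ^ 2 / 2 := by field_simp
  have h5 : H⁻¹ * ‖v‖ ^ 2 ≤ 0 := by linarith
  have h6 : ‖v‖ ^ 2 ≤ 0 := by
    by_contra! h
    have : 0 < H⁻¹ * ‖v‖ ^ 2 := by positivity
    linarith
  have h7 : ‖v‖ = 0 := by nlinarith [norm_nonneg v]
  exact norm_eq_zero.1 h7

omit [InnerProductSpace ℝ E] in
lemma sq_norm_sum_le {M : ℕ} (v : Fin M → E) : ‖∑ m, v m‖ ^ 2 ≤ M * ∑ m, ‖v m‖ ^ 2 := by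
  calc ‖∑ m, v m‖ ^ 2 ≤ (∑ m, ‖v m‖) ^ 2 := by gcongr; exact norm_sum_le _ _
    _ ≤ _ := by simpa using sq_sum_le_card_mul_sum_sq (s := Finset.univ) (f := fun m => ‖v m‖)

lemma sq_norm_mean_le {M : ℕ} (hM : 1 ≤ M) (v : Fin M → E) :
    ‖(M : ℝ)⁻¹ • ∑ m, v m‖ ^ 2 ≤ (M : ℝ)⁻¹ * ∑ m, ‖v m‖ ^ 2 := by
  have hM' : (0 : ℝ) < M := by exact_mod_cast hM
  rw [norm_smul, mul_pow, Real.norm_eq_abs, sq_abs]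
  calc (M : ℝ)⁻¹ ^ 2 * ‖∑ m, v m‖ ^ 2 ≤ (M : ℝ)⁻¹ ^ 2 * (M * ∑ m, ‖v m‖ ^ 2) := by
        gcongr; exact sq_norm_sum_le v
    _ = _ := by field_simp

omit [InnerProductSpace ℝ E] in
lemma sq_norm_add_three_le (a b c : E) :
    ‖a + b + c‖ ^ 2 ≤ 3 * (‖a‖ ^ 2 + ‖b‖ ^ 2 + ‖c‖ ^ 2) := by
  have h := norm_add₃_le (a := a) (b := b) (c := c)
  nlinarith [norm_nonneg (a + b + c), sq_nonneg (‖a‖ - ‖b‖), sq_nonneg (‖a‖ - ‖c‖),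
    sq_nonneg (‖b‖ - ‖c‖)]

/-- Splitting of the averaged stochastic gradient `p` into drift `p - q`, suboptimality `q - r`
and centred noise at the optimum `r - c`; the means `c` at the optimum cancel on average. -/
lemma sq_norm_mean_split {M : ℕ} (hM : 1 ≤ M) (p q r c : Fin M → E) (hc : ∑ m, c m = 0) :
    ‖(M : ℝ)⁻¹ • ∑ m, p m‖ ^ 2 ≤ 3 * ((M : ℝ)⁻¹ * ∑ m, ‖p m - q m‖ ^ 2
      + (M : ℝ)⁻¹ * ∑ m, ‖q m - r m‖ ^ 2 + (M : ℝ)⁻¹ ^ 2 * ‖∑ m, (r m - c m)‖ ^ 2) := by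
  have e : (M : ℝ)⁻¹ • ∑ m, p m = (M : ℝ)⁻¹ • ∑ m, (p m - q m) + (M : ℝ)⁻¹ • ∑ m, (q m - r m)
      + (M : ℝ)⁻¹ • ∑ m, (r m - c m) := by
    rw [← smul_add, ← smul_add]
    simp [hc]
  rw [e]
  refine (sq_norm_add_three_le _ _ _).trans ?_
  have h1 := sq_norm_mean_le hM fun m => p m - q m
  have h2 := sq_norm_mean_le hM fun m => q m - r m
  have h3 : ‖(M : ℝ)⁻¹ • ∑ m, (r m - c m)‖ ^ 2 = (M : ℝ)⁻¹ ^ 2 * ‖∑ m, (r m - c m)‖ ^ 2 := by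
    rw [norm_smul, mul_pow, Real.norm_eq_abs, sq_abs]
  rw [h3]
  linarith

end Smooth

/-! ### Integrability and variance of the sampled gradients -/

section Sampling

variable {d M : ℕ} {Z : Type*} [MeasurableSpace Z]

/-- Sampled gradients of integrable smooth convex losses are integrable: each directional
derivative is squeezed between two integrable functions. -/
lemma integrable_grad {H : ℝ} {D : Measure Z} [IsProbabilityMeasure D]
    {f : EuclideanSpace ℝ (Fin d) → Z → ℝ}
    {g : EuclideanSpace ℝ (Fin d) → Z → EuclideanSpace ℝ (Fin d)}
    (hg : ∀ x, Measurable (g x)) (hf : ∀ x, Integrable (f x) D)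
    (hs : ∀ z x y, f y z ≤ f x z + ⟪g x z, y - x⟫ + H / 2 * ‖x - y‖ ^ 2)
    (hc : ∀ z, ConvexOn ℝ Set.univ fun x => f x z) (x : EuclideanSpace ℝ (Fin d)) :
    Integrable (g x) D := by
  refine integrable_piLp_iff.2 fun i => ?_
  set e : EuclideanSpace ℝ (Fin d) := EuclideanSpace.single i 1 with he
  have hin : ∀ z, ⟪g x z, (x + e) - x⟫ = g x z i := by
    intro z
    simp [he, EuclideanSpace.inner_single_right]
  refine MeasureTheory.integrable_of_le_of_le
    (g₁ := fun z => f (x + e) z - f x z - H / 2 * ‖x - (x + e)‖ ^ 2)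
    (g₂ := fun z => f (x + e) z - f x z) ?_ ?_ ?_ ?_ ?_
  · have : Measurable fun z => g x z i := by
      have := hg x
      fun_prop
    exact this.aestronglyMeasurable
  · refine Filter.Eventually.of_forall fun z => ?_
    have := hs z x (x + e)
    rw [hin] at this
    dsimp only
    linarith
  · refine Filter.Eventually.of_forall fun z => ?_
    have := convex_lower_bound (hs z) (hc z) x (x + e)
    rw [hin] at this
    dsimp only
    linarith
  · exact ((hf _).sub (hf _)).sub (integrable_const _)
  · exact (hf _).sub (hf _)

/-- Square-integrability of the sampled gradient does not depend on the point. -/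
lemma memLp_grad_of_memLp {H : ℝ} (hH : 0 < H) {D : Measure Z} [IsProbabilityMeasure D]
    {f : EuclideanSpace ℝ (Fin d) → Z → ℝ}
    {g : EuclideanSpace ℝ (Fin d) → Z → EuclideanSpace ℝ (Fin d)}
    (hg : ∀ x, Measurable (g x))
    (hs : ∀ z x y, f y z ≤ f x z + ⟪g x z, y - x⟫ + H / 2 * ‖x - y‖ ^ 2)
    (hc : ∀ z, ConvexOn ℝ Set.univ fun x => f x z) (x y : EuclideanSpace ℝ (Fin d))
    (hx : MemLp (g x) 2 D) : MemLp (g y) 2 D := by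
  have h : MemLp (fun z => g y z - g x z) 2 D := by
    refine MemLp.of_bound ((hg y).sub (hg x)).aestronglyMeasurable (H * ‖y - x‖)
      (Filter.Eventually.of_forall fun z => ?_)
    refine le_of_sq_le_sq ?_ (by positivity)
    rw [mul_pow]
    exact sq_norm_grad_sub_le_sq hH (hs z) (hc z) y x
  have := h.add hx
  convert this using 1
  ext z : 1
  simp

/-- Square-integrability of a shifted sum of functions of independent coordinates passes to each
summand: freeze all the other coordinates at a generic value. -/
lemma memLp_of_integrable_sq_norm_sum {D : Fin M → Measure Z} [∀ m, IsProbabilityMeasure (D m)]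
    {u : Fin M → Z → EuclideanSpace ℝ (Fin d)} (hu : ∀ m, Measurable (u m))
    (a : EuclideanSpace ℝ (Fin d)) {c : ℝ} (hc : c ≠ 0)
    (hint : Integrable (fun zs : Fin M → Z => ‖a - c • ∑ m, u m (zs m)‖ ^ 2) (Measure.pi D))
    (m : Fin M) : MemLp (u m) 2 (D m) := by
  obtain _ | n := M
  · exact m.elim0
  have hmp := measurePreserving_piFinSuccAbove D m
  have h1 := (hmp.symm _).integrable_comp_of_integrable hint
  have h2 := h1.swap.prod_right_ae
  obtain ⟨w, hw⟩ := h2.exists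
  have h3 : Integrable (fun z => ‖(a - c • ∑ j, u (m.succAbove j) (w j)) - c • u m z‖ ^ 2)
      (D m) := by
    convert hw using 2 with z
    have e : (MeasurableEquiv.piFinSuccAbove (fun _ => Z) m).symm (z, w)
        = m.insertNth (α := fun _ => Z) z w := rfl
    simp only [Function.comp_apply, Prod.swap_prod_mk, e, Fin.sum_univ_succAbove _ m, smul_add,
      Fin.insertNth_apply_same, Fin.insertNth_apply_succAbove]
    congr 2
    abel
  have h4 : MemLp (fun z => (a - c • ∑ j, u (m.succAbove j) (w j)) - c • u m z) 2 (D m) :=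
    (memLp_two_iff_integrable_sq_norm (by have := hu m; fun_prop)).2 h3
  have h5 := ((memLp_const (a - c • ∑ j, u (m.succAbove j) (w j))).sub h4).const_smul c⁻¹
  refine h5.ae_eq (Filter.Eventually.of_forall fun z => ?_)
  simp [smul_smul, hc]

/-- Independent centred vectors are orthogonal in `L²`. -/
lemma integral_sq_norm_sum {D : Fin M → Measure Z} [∀ m, IsProbabilityMeasure (D m)]
    {u : Fin M → Z → EuclideanSpace ℝ (Fin d)} (hu : ∀ m, MemLp (u m) 2 (D m))
    (h0 : ∀ m, ∫ z, u m z ∂(D m) = 0) :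
    ∫ zs, ‖∑ m, u m (zs m)‖ ^ 2 ∂(Measure.pi D) = ∑ m, ∫ z, ‖u m z‖ ^ 2 ∂(D m) := by
  have hui : ∀ m i, MemLp (fun z => u m z i) 2 (D m) := fun m i => (hu m).eval_piLp i
  have hui0 : ∀ m i, ∫ z, u m z i ∂(D m) = 0 := by
    intro m i
    rw [← eval_integral_piLp fun j => (hui m j).integrable one_le_two, h0 m]
    rfl
  have hpi : ∀ m i, MemLp (fun zs : Fin M → Z => u m (zs m) i) 2 (Measure.pi D) := fun m i =>
    (hui m i).comp_measurePreserving (measurePreserving_eval D m)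
  have hcoord : ∀ i, ∫ zs, (∑ m, u m (zs m) i) ^ 2 ∂(Measure.pi D)
      = ∑ m, ∫ z, (u m z i) ^ 2 ∂(D m) := by
    intro i
    have hv := ProbabilityTheory.variance_sum_pi (μ := D) (X := fun m z => u m z i)
      fun m => hui m i
    rw [ProbabilityTheory.variance_of_integral_eq_zero] at hv
    · rw [← Finset.sum_congr rfl fun m _ =>
        ProbabilityTheory.variance_of_integral_eq_zero (hui m i).aemeasurable (hui0 m i), ← hv]
      simp
    · exact (memLp_finsetSum' _ fun m _ => hpi m i).aemeasurable
    · simp only [Finset.sum_apply]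
      rw [integral_finsetSum _ fun m _ => (hpi m i).integrable one_le_two]
      refine Finset.sum_eq_zero fun m _ => ?_
      rw [integral_comp_eval (μ := D) (i := m) (f := fun z => u m z i)
        (hui m i).aestronglyMeasurable, hui0]
  simp_rw [EuclideanSpace.real_norm_sq_eq]
  rw [integral_finsetSum]
  · simp_rw [WithLp.ofLp_sum, Finset.sum_apply, hcoord]
    rw [Finset.sum_comm]
    refine Finset.sum_congr rfl fun m _ => ?_
    rw [integral_finsetSum _ fun i _ => (hui m i).integrable_sq]
  · intro i _
    simp_rw [WithLp.ofLp_sum, Finset.sum_apply]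
    exact (memLp_finsetSum _ fun m _ => hpi m i).integrable_sq

end Sampling

/-! ### One step from fixed iterates -/

section OneStep

variable {d M : ℕ} {Z : Type*} [MeasurableSpace Z]

set_option maxHeartbeats 1000000 in
/-- Bound on the mean squared distance after one step from deterministic iterates `X m`.
The vectors `G m x` play the role of `∇ F_m(x)`. -/
lemma integral_sq_norm_step_le (hM : 1 ≤ M) {H σs : ℝ} (hH : 0 < H)
    {D : Fin M → Measure Z} [∀ m, IsProbabilityMeasure (D m)]
    {f : EuclideanSpace ℝ (Fin d) → Z → ℝ}
    {g : EuclideanSpace ℝ (Fin d) → Z → EuclideanSpace ℝ (Fin d)}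
    (hg : ∀ x, Measurable (g x)) (hf : ∀ m x, Integrable (f x) (D m))
    (hs : ∀ z x y, f y z ≤ f x z + ⟪g x z, y - x⟫ + H / 2 * ‖x - y‖ ^ 2)
    (hc : ∀ z, ConvexOn ℝ Set.univ fun x => f x z)
    {G : Fin M → EuclideanSpace ℝ (Fin d) → EuclideanSpace ℝ (Fin d)}
    (hG : ∀ m x, G m x = ∫ z, g x z ∂(D m))
    {xs : EuclideanSpace ℝ (Fin d)} (hG0 : ∑ m, G m xs = 0)
    (hL2 : ∀ m, MemLp (g xs) 2 (D m))
    (hvar : ∀ m, ∫ z, ‖g xs z - G m xs‖ ^ 2 ∂(D m) ≤ σs ^ 2)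
    (X : Fin M → EuclideanSpace ℝ (Fin d)) (xb : EuclideanSpace ℝ (Fin d)) (η : ℝ) :
    ∫ zs, ‖xb - (η / M) • ∑ m, g (X m) (zs m) - xs‖ ^ 2 ∂(Measure.pi D) ≤
      ‖xb - xs‖ ^ 2 - 2 * η * ((M : ℝ)⁻¹ * ∑ m, ⟪G m (X m), xb - xs⟫)
      + η ^ 2 * (3 * H ^ 2 * ((M : ℝ)⁻¹ * ∑ m, ‖xb - X m‖ ^ 2)
        + 6 * H * ((M : ℝ)⁻¹ * ∑ m, (∫ z, f xb z ∂(D m) - ∫ z, f xs z ∂(D m)))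
        + 3 * σs ^ 2 / M) := by
  have hM' : (0 : ℝ) < M := by exact_mod_cast hM
  have hgi : ∀ m x, Integrable (g x) (D m) := fun m x => integrable_grad hg (hf m) hs hc x
  have hini : ∀ m x v, Integrable (fun z => ⟪g x z, v⟫) (D m) := fun m x v =>
    (hgi m x).inner_const v
  have hin : ∀ m x v, ∫ z, ⟪g x z, v⟫ ∂(D m) = ⟪G m x, v⟫ := by
    intro m x v
    rw [hG, real_inner_comm, ← integral_inner (hgi m x) v]
    simp_rw [real_inner_comm]
  -- the Bregman divergence of the sampled loss between the averaged iterate and the optimum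
  set B : Z → ℝ := fun z => f xb z - f xs z - ⟪g xs z, xb - xs⟫ with hB
  have hBi : ∀ m, Integrable B (D m) := fun m =>
    ((hf m xb).sub (hf m xs)).sub (hini m xs _)
  have hBint : ∀ m, ∫ z, B z ∂(D m)
      = (∫ z, f xb z ∂(D m) - ∫ z, f xs z ∂(D m)) - ⟪G m xs, xb - xs⟫ := by
    intro m
    refine (integral_sub ((hf m xb).sub (hf m xs)) (hini m xs _)).trans ?_
    rw [hin]
    congr 1
    exact integral_sub (hf m xb) (hf m xs)
  have hsumB : ∑ m, ∫ z, B z ∂(D m)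
      = ∑ m, (∫ z, f xb z ∂(D m) - ∫ z, f xs z ∂(D m)) := by
    simp_rw [hBint]
    rw [Finset.sum_sub_distrib, ← sum_inner, hG0, inner_zero_left, sub_zero]
  -- the centred noise at the optimum
  have hcen : ∀ m, MemLp (fun z => g xs z - G m xs) 2 (D m) := fun m =>
    (hL2 m).sub (memLp_const _)
  have hcen0 : ∀ m, ∫ z, (g xs z - G m xs) ∂(D m) = 0 := by
    intro m
    rw [integral_sub (hgi m xs) (integrable_const _), ← hG]
    simp
  have hNi : Integrable (fun zs : Fin M → Z => ‖∑ m, (g xs (zs m) - G m xs)‖ ^ 2)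
      (Measure.pi D) := by
    have : MemLp (fun zs : Fin M → Z => ∑ m, (g xs (zs m) - G m xs)) 2 (Measure.pi D) :=
      memLp_finsetSum _ fun m _ =>
        (hcen m).comp_measurePreserving (measurePreserving_eval D m)
    exact this.integrable_norm_pow two_ne_zero
  have hN : ∫ zs, ‖∑ m, (g xs (zs m) - G m xs)‖ ^ 2 ∂(Measure.pi D) ≤ M * σs ^ 2 := by
    rw [integral_sq_norm_sum (u := fun m z => g xs z - G m xs) hcen hcen0]
    calc _ ≤ ∑ _m : Fin M, σs ^ 2 := Finset.sum_le_sum fun m _ => hvar m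
      _ = _ := by simp
  set R : (Fin M → Z) → ℝ := fun zs =>
    ‖xb - xs‖ ^ 2 - 2 * η * ((M : ℝ)⁻¹ * ∑ m, ⟪g (X m) (zs m), xb - xs⟫)
      + η ^ 2 * (3 * H ^ 2 * ((M : ℝ)⁻¹ * ∑ m, ‖xb - X m‖ ^ 2)
        + 6 * H * ((M : ℝ)⁻¹ * ∑ m, B (zs m))
        + 3 * (M : ℝ)⁻¹ ^ 2 * ‖∑ m, (g xs (zs m) - G m xs)‖ ^ 2) with hR
  have hpt : ∀ zs : Fin M → Z,
      ‖xb - (η / M) • ∑ m, g (X m) (zs m) - xs‖ ^ 2 ≤ R zs := by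
    intro zs
    have e : xb - (η / M) • ∑ m, g (X m) (zs m) - xs
        = (xb - xs) - η • ((M : ℝ)⁻¹ • ∑ m, g (X m) (zs m)) := by
      rw [smul_smul, ← div_eq_mul_inv]; abel
    have e2 : ⟪xb - xs, η • ((M : ℝ)⁻¹ • ∑ m, g (X m) (zs m))⟫
        = η * ((M : ℝ)⁻¹ * ∑ m, ⟪g (X m) (zs m), xb - xs⟫) := by
      rw [real_inner_smul_right, real_inner_smul_right, real_inner_comm, sum_inner]
    have e3 : ‖η • ((M : ℝ)⁻¹ • ∑ m, g (X m) (zs m))‖ ^ 2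
        = η ^ 2 * ‖(M : ℝ)⁻¹ • ∑ m, g (X m) (zs m)‖ ^ 2 := by
      rw [norm_smul, mul_pow, Real.norm_eq_abs, sq_abs]
    rw [e, norm_sub_sq_real, e2, e3]
    have h1 := sq_norm_mean_split hM (fun m => g (X m) (zs m)) (fun m => g xb (zs m))
      (fun m => g xs (zs m)) (fun m => G m xs) hG0
    have h2 : (M : ℝ)⁻¹ * ∑ m, ‖g (X m) (zs m) - g xb (zs m)‖ ^ 2
        ≤ (M : ℝ)⁻¹ * ∑ m, H ^ 2 * ‖xb - X m‖ ^ 2 := by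
      gcongr with m
      rw [norm_sub_rev xb]
      exact sq_norm_grad_sub_le_sq hH (hs (zs m)) (hc (zs m)) _ _
    have h3 : (M : ℝ)⁻¹ * ∑ m, ‖g xb (zs m) - g xs (zs m)‖ ^ 2
        ≤ (M : ℝ)⁻¹ * ∑ m, 2 * H * B (zs m) := by
      gcongr with m
      exact sq_norm_grad_sub_le hH (hs (zs m)) (hc (zs m)) _ _
    rw [← Finset.mul_sum] at h2 h3
    have h4 := mul_le_mul_of_nonneg_left (h1.trans (mul_le_mul_of_nonneg_left
      (add_le_add (add_le_add h2 h3) le_rfl) (by norm_num : (0 : ℝ) ≤ 3))) (sq_nonneg η)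
    rw [hR]
    dsimp only
    linarith
  have hi1 : Integrable (fun zs : Fin M → Z => ∑ m, ⟪g (X m) (zs m), xb - xs⟫) (Measure.pi D) :=
    integrable_finsetSum _ fun m _ =>
      integrable_comp_eval (μ := D) (i := m) (f := fun z => ⟪g (X m) z, xb - xs⟫) (hini m _ _)
  have hi2 : Integrable (fun zs : Fin M → Z => ∑ m, B (zs m)) (Measure.pi D) :=
    integrable_finsetSum _ fun m _ => integrable_comp_eval (μ := D) (i := m) (f := B) (hBi m)
  have hv1 : ∫ zs, ∑ m, ⟪g (X m) (zs m), xb - xs⟫ ∂(Measure.pi D)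
      = ∑ m, ⟪G m (X m), xb - xs⟫ := by
    rw [integral_finsetSum _ fun m _ =>
      integrable_comp_eval (μ := D) (i := m) (f := fun z => ⟪g (X m) z, xb - xs⟫) (hini m _ _)]
    refine Finset.sum_congr rfl fun m _ => ?_
    rw [integral_comp_eval (μ := D) (i := m) (f := fun z => ⟪g (X m) z, xb - xs⟫)
      (hini m _ _).aestronglyMeasurable, hin]
  have hv2 : ∫ zs, ∑ m, B (zs m) ∂(Measure.pi D)
      = ∑ m, (∫ z, f xb z ∂(D m) - ∫ z, f xs z ∂(D m)) := by
    rw [integral_finsetSum _ fun m _ => integrable_comp_eval (μ := D) (i := m) (f := B) (hBi m),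
      ← hsumB]
    refine Finset.sum_congr rfl fun m _ => ?_
    rw [integral_comp_eval (μ := D) (i := m) (f := B) (hBi m).aestronglyMeasurable]
  have hj1 := (hi1.const_mul (M : ℝ)⁻¹).const_mul (2 * η)
  have hj2 := (hi2.const_mul (M : ℝ)⁻¹).const_mul (6 * H)
  have hj3 := hNi.const_mul (3 * (M : ℝ)⁻¹ ^ 2)
  have hj4 := ((integrable_const (μ := Measure.pi D)
    (3 * H ^ 2 * ((M : ℝ)⁻¹ * ∑ m, ‖xb - X m‖ ^ 2))).add hj2)
  have hj5 := (hj4.add hj3).const_mul (η ^ 2)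
  have hj6 := (integrable_const (μ := Measure.pi D) (‖xb - xs‖ ^ 2)).sub hj1
  calc _ ≤ ∫ zs, R zs ∂(Measure.pi D) :=
        integral_mono_of_nonneg (Filter.Eventually.of_forall fun _ => by positivity)
          (hj6.add hj5) (Filter.Eventually.of_forall hpt)
    _ = ‖xb - xs‖ ^ 2 - 2 * η * ((M : ℝ)⁻¹ * ∑ m, ⟪G m (X m), xb - xs⟫)
      + η ^ 2 * (3 * H ^ 2 * ((M : ℝ)⁻¹ * ∑ m, ‖xb - X m‖ ^ 2)
        + 6 * H * ((M : ℝ)⁻¹ * ∑ m, (∫ z, f xb z ∂(D m) - ∫ z, f xs z ∂(D m)))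
        + 3 * (M : ℝ)⁻¹ ^ 2 *
          ∫ zs, ‖∑ m, (g xs (zs m) - G m xs)‖ ^ 2 ∂(Measure.pi D)) := by
      rw [hR]
      refine (integral_add hj6 hj5).trans ?_
      congr 1
      · refine (integral_sub (integrable_const _) hj1).trans ?_
        rw [integral_const_mul, integral_const_mul, hv1]
        simp
      · refine (integral_const_mul _ _).trans ?_
        congr 1
        refine (integral_add hj4 hj3).trans ?_
        congr 1
        · refine (integral_add (integrable_const _) hj2).trans ?_
          congr 1
          · simp
          · rw [integral_const_mul, integral_const_mul, hv2]
        · exact integral_const_mul _ _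
    _ ≤ _ := by
      have h : 3 * (M : ℝ)⁻¹ ^ 2 *
          ∫ zs, ‖∑ m, (g xs (zs m) - G m xs)‖ ^ 2 ∂(Measure.pi D) ≤ 3 * σs ^ 2 / M := by
        calc _ ≤ 3 * (M : ℝ)⁻¹ ^ 2 * (M * σs ^ 2) := by gcongr
          _ = _ := by field_simp
      gcongr

/-- The descent inequality from deterministic iterates `X m` with average `xb`. -/
lemma step_progress_fixed (hM : 1 ≤ M) {H lam σs η : ℝ} (hH : 0 < H) (hlam : 0 ≤ lam)
    (hη : 0 < η) (hηH : η ≤ 1 / (10 * H))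
    {D : Fin M → Measure Z} [∀ m, IsProbabilityMeasure (D m)]
    {f : EuclideanSpace ℝ (Fin d) → Z → ℝ}
    {g : EuclideanSpace ℝ (Fin d) → Z → EuclideanSpace ℝ (Fin d)}
    (hg : ∀ x, Measurable (g x)) (hf : ∀ m x, Integrable (f x) (D m))
    (hs : ∀ z x y, f y z ≤ f x z + ⟪g x z, y - x⟫ + H / 2 * ‖x - y‖ ^ 2)
    (hc : ∀ z, ConvexOn ℝ Set.univ fun x => f x z)
    {Fm : Fin M → EuclideanSpace ℝ (Fin d) → ℝ} (hFm : ∀ m x, Fm m x = ∫ z, f x z ∂(D m))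
    {F : EuclideanSpace ℝ (Fin d) → ℝ} (hF : ∀ x, F x = (M : ℝ)⁻¹ * ∑ m, Fm m x)
    {G : Fin M → EuclideanSpace ℝ (Fin d) → EuclideanSpace ℝ (Fin d)}
    (hG : ∀ m x, G m x = ∫ z, g x z ∂(D m))
    (hsc : ∀ m x y, Fm m y ≥ Fm m x + ⟪G m x, y - x⟫ + lam / 2 * ‖x - y‖ ^ 2)
    {xs : EuclideanSpace ℝ (Fin d)} (hmin : ∀ y, F xs ≤ F y)
    (hL2 : ∀ m, MemLp (g xs) 2 (D m))
    (hvar : ∀ m, ∫ z, ‖g xs z - G m xs‖ ^ 2 ∂(D m) ≤ σs ^ 2)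
    (X : Fin M → EuclideanSpace ℝ (Fin d)) {xb : EuclideanSpace ℝ (Fin d)}
    (hxb : xb = (M : ℝ)⁻¹ • ∑ m, X m) :
    F xb - F xs ≤ (1 / η - lam) * ‖xb - xs‖ ^ 2
      - (1 / η) * (∫ zs, ‖xb - (η / M) • ∑ m, g (X m) (zs m) - xs‖ ^ 2 ∂(Measure.pi D))
      + 3 * σs ^ 2 * η / M + (2 * H / M) * ∑ m, ‖xb - X m‖ ^ 2 := by
  have hM' : (0 : ℝ) < M := by exact_mod_cast hM
  have hgi : ∀ m x, Integrable (g x) (D m) := fun m x => integrable_grad hg (hf m) hs hc x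
  -- smoothness is inherited by the expected losses and by their average
  have hsm : ∀ m x y, Fm m y ≤ Fm m x + ⟪G m x, y - x⟫ + H / 2 * ‖x - y‖ ^ 2 := by
    intro m x y
    have hin : ∫ z, ⟪g x z, y - x⟫ ∂(D m) = ⟪G m x, y - x⟫ := by
      rw [hG, real_inner_comm, ← integral_inner (hgi m x) (y - x)]
      simp_rw [real_inner_comm]
    have hi : Integrable (fun z => ⟪g x z, y - x⟫) (D m) := (hgi m x).inner_const _
    rw [hFm, hFm, ← hin, ← integral_add (hf m x) hi]
    have : ∫ z, (f x z + ⟪g x z, y - x⟫ + H / 2 * ‖x - y‖ ^ 2) ∂(D m)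
        = ∫ z, (f x z + ⟪g x z, y - x⟫) ∂(D m) + H / 2 * ‖x - y‖ ^ 2 := by
      refine (integral_add ((hf m x).add hi) (integrable_const _)).trans ?_
      simp
    rw [← this]
    exact integral_mono (hf m y) (((hf m x).add hi).add (integrable_const _))
      fun z => hs z x y
  have hsF : ∀ y, F y ≤ F xs + ⟪(M : ℝ)⁻¹ • ∑ m, G m xs, y - xs⟫ + H / 2 * ‖xs - y‖ ^ 2 := by
    intro y
    rw [hF, hF, real_inner_smul_left, sum_inner]
    calc (M : ℝ)⁻¹ * ∑ m, Fm m y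
        ≤ (M : ℝ)⁻¹ * ∑ m, (Fm m xs + ⟪G m xs, y - xs⟫ + H / 2 * ‖xs - y‖ ^ 2) := by
          gcongr with m
          exact hsm m xs y
      _ = _ := by
          rw [Finset.sum_add_distrib, Finset.sum_add_distrib]
          simp only [Finset.sum_const, Finset.card_univ, Fintype.card_fin, nsmul_eq_mul]
          field_simp
  have hG0 : ∑ m, G m xs = 0 := by
    have := slope_eq_zero_of_min hH hsF hmin
    exact (smul_eq_zero.1 this).resolve_left (by positivity)
  have hstep := integral_sq_norm_step_le hM hH hg hf hs hc hG hG0 hL2 hvar X xb η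
  set I := ∫ zs, ‖xb - (η / M) • ∑ m, g (X m) (zs m) - xs‖ ^ 2 ∂(Measure.pi D)
  set V := (M : ℝ)⁻¹ * ∑ m, ‖xb - X m‖ ^ 2 with hV
  set P := (M : ℝ)⁻¹ * ∑ m, ⟪G m (X m), xb - xs⟫ with hP
  have hΔ : (M : ℝ)⁻¹ * ∑ m, (∫ z, f xb z ∂(D m) - ∫ z, f xs z ∂(D m)) = F xb - F xs := by
    rw [Finset.sum_sub_distrib, mul_sub, hF, hF]
    simp_rw [hFm]
  rw [hΔ] at hstep
  have hΔ0 : 0 ≤ F xb - F xs := sub_nonneg.2 (hmin xb)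
  have hV0 : 0 ≤ V := by positivity
  -- Jensen's inequality for the distance of the average to the optimum
  have hJ : ‖xb - xs‖ ^ 2 ≤ (M : ℝ)⁻¹ * ∑ m, ‖X m - xs‖ ^ 2 := by
    have e : xb - xs = (M : ℝ)⁻¹ • ∑ m, (X m - xs) := by
      rw [hxb, Finset.sum_sub_distrib, smul_sub]
      congr 1
      simp only [Finset.sum_const, Finset.card_univ, Fintype.card_fin]
      rw [← Nat.cast_smul_eq_nsmul ℝ, smul_smul, inv_mul_cancel₀ hM'.ne', one_smul]
    rw [e]
    exact sq_norm_mean_le hM _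
  -- strong convexity towards `xs` together with smoothness towards `xb`
  have hPl : F xb - F xs + lam / 2 * ‖xb - xs‖ ^ 2 - H / 2 * V ≤ P := by
    have h1 : ∀ m, Fm m xb - Fm m xs + lam / 2 * ‖X m - xs‖ ^ 2 - H / 2 * ‖xb - X m‖ ^ 2
        ≤ ⟪G m (X m), xb - xs⟫ := by
      intro m
      have a := hsc m (X m) xs
      have b := hsm m (X m) xb
      have e : ⟪G m (X m), xb - xs⟫ = ⟪G m (X m), xb - X m⟫ - ⟪G m (X m), xs - X m⟫ := by
        rw [← inner_sub_right]; congr 1; abel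
      rw [norm_sub_rev (X m) xb] at b
      linarith
    have h2 : (M : ℝ)⁻¹ * ∑ m, (Fm m xb - Fm m xs + lam / 2 * ‖X m - xs‖ ^ 2
        - H / 2 * ‖xb - X m‖ ^ 2) ≤ P := by
      rw [hP]
      gcongr with m
      exact h1 m
    simp only [Finset.sum_sub_distrib, Finset.sum_add_distrib, ← Finset.mul_sum] at h2
    have h3 := mul_le_mul_of_nonneg_left hJ (show 0 ≤ lam / 2 by positivity)
    rw [hF, hF, hV]
    linarith
  have hηH' : η * H ≤ 1 / 10 := by
    rw [le_div_iff₀ (by positivity)] at hηH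
    linarith
  have h1 : (1 / η) * I ≤ (1 / η) * ‖xb - xs‖ ^ 2 - 2 * P
      + η * (3 * H ^ 2 * V + 6 * H * (F xb - F xs) + 3 * σs ^ 2 / M) := by
    calc (1 / η) * I ≤ _ := mul_le_mul_of_nonneg_left hstep (by positivity)
      _ = _ := by field_simp
  have h2 : η * (3 * H ^ 2 * V) ≤ 3 / 10 * (H * V) := by
    have := mul_le_mul_of_nonneg_right hηH' (show 0 ≤ 3 * (H * V) by positivity)
    linarith
  have h3 : η * (6 * H * (F xb - F xs)) ≤ 6 / 10 * (F xb - F xs) := by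
    have := mul_le_mul_of_nonneg_right hηH' (show 0 ≤ 6 * (F xb - F xs) by positivity)
    linarith
  have h4 : (2 * H / M) * ∑ m, ‖xb - X m‖ ^ 2 = 2 * (H * V) := by
    rw [hV]; field_simp
  have h5 : 3 * σs ^ 2 * η / M = η * (3 * σs ^ 2 / M) := by ring
  have h6 : 0 ≤ H * V := by positivity
  rw [h4, h5]
  linarith

end OneStep

/-- One-step progress lemma for the averaged iterate: if each machine takes
one stochastic gradient step from its iterate `x_t^m` with a fresh independent sample, then
for any stepsize `η_t ≤ 1/(10H)`,
`𝔼[F(x̄_t) - F⋆] ≤ (1/η_t - λ) 𝔼‖x̄_t - x⋆‖² - (1/η_t) 𝔼‖x̄_{t+1} - x⋆‖²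
  + 3σ⋆²η_t/M + (2H/M) Σ_m 𝔼‖x̄_t - x_t^m‖²`. -/
theorem local_sgd_one_step_progress
    (d M : ℕ) (hM : 1 ≤ M)
    (H lam σs : ℝ) (hH : 0 < H) (hlam : 0 ≤ lam) (hσs : 0 ≤ σs)
    (Z : Type*) [MeasurableSpace Z]
    (D : Fin M → Measure Z) [∀ m, IsProbabilityMeasure (D m)]
    (f : EuclideanSpace ℝ (Fin d) → Z → ℝ)
    (hgradmeas : ∀ x' : EuclideanSpace ℝ (Fin d),
      Measurable fun z => gradient (fun y => f y z) x')
    (hfint : ∀ (m : Fin M) (x' : EuclideanSpace ℝ (Fin d)), Integrable (fun z => f x' z) (D m))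
    (Fm : Fin M → EuclideanSpace ℝ (Fin d) → ℝ)
    (hFm : ∀ m x', Fm m x' = ∫ z, f x' z ∂(D m))
    (F : EuclideanSpace ℝ (Fin d) → ℝ)
    (hF : ∀ x', F x' = (M : ℝ)⁻¹ * ∑ m : Fin M, Fm m x')
    -- `f(·;z)` is `H`-smooth and convex, each `F_m` is `λ`-strongly convex (`λ ≥ 0`)
    (hsmooth : ∀ (z : Z) (x' y : EuclideanSpace ℝ (Fin d)),
      f y z ≤ f x' z + ⟪gradient (fun u => f u z) x', y - x'⟫ + H / 2 * ‖x' - y‖ ^ 2)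
    (hconvex : ∀ z : Z, ConvexOn ℝ Set.univ fun x' => f x' z)
    (hsc : ∀ (m : Fin M) (x' y : EuclideanSpace ℝ (Fin d)),
      Fm m y ≥ Fm m x' + ⟪gradient (Fm m) x', y - x'⟫ + lam / 2 * ‖x' - y‖ ^ 2)
    -- the minimizer and the variance bound at the optimum
    (xstar : EuclideanSpace ℝ (Fin d))
    (hmin : ∀ y, F xstar ≤ F y)
    (hvarstar : ∀ m : Fin M,
      ∫ z, ‖gradient (fun y => f y z) xstar - gradient (Fm m) xstar‖ ^ 2 ∂(D m) ≤ σs ^ 2)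
    (hswap : ∀ (m : Fin M) (x' : EuclideanSpace ℝ (Fin d)),
      gradient (Fm m) x' = ∫ z, gradient (fun y => f y z) x' ∂(D m))
    -- the current iterates, on an arbitrary probability space
    (Ω₀ : Type*) [MeasurableSpace Ω₀] (μ₀ : Measure Ω₀) [IsProbabilityMeasure μ₀]
    (x : Fin M → Ω₀ → EuclideanSpace ℝ (Fin d))
    (hxmeas : ∀ m, Measurable (x m))
    -- the averaged iterate before and after the simultaneous stochastic gradient step
    (xbar : Ω₀ → EuclideanSpace ℝ (Fin d))
    (hxbar : ∀ ω₀, xbar ω₀ = (M : ℝ)⁻¹ • ∑ m : Fin M, x m ω₀)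
    (η : ℝ) (hη : 0 < η) (hηH : η ≤ 1 / (10 * H))
    (xnext : Ω₀ × (Fin M → Z) → EuclideanSpace ℝ (Fin d))
    (hxnext : ∀ (ω₀ : Ω₀) (zs : Fin M → Z), xnext (ω₀, zs) =
      xbar ω₀ - (η / M) • ∑ m : Fin M, gradient (fun y => f y (zs m)) (x m ω₀))
    -- integrability of the quantities appearing in the statement
    (hint1 : Integrable (fun ω₀ => F (xbar ω₀)) μ₀)
    (hint2 : Integrable (fun ω₀ => ‖xbar ω₀ - xstar‖ ^ 2) μ₀)
    (hint3 : Integrable (fun p => ‖xnext p - xstar‖ ^ 2)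
      (μ₀.prod (Measure.pi fun m : Fin M => D m)))
    (hint4 : ∀ m : Fin M, Integrable (fun ω₀ => ‖xbar ω₀ - x m ω₀‖ ^ 2) μ₀) :
    (∫ ω₀, (F (xbar ω₀) - F xstar) ∂μ₀) ≤
      (1 / η - lam) * (∫ ω₀, ‖xbar ω₀ - xstar‖ ^ 2 ∂μ₀) -
        (1 / η) * (∫ p, ‖xnext p - xstar‖ ^ 2 ∂(μ₀.prod (Measure.pi fun m : Fin M => D m))) +
        3 * σs ^ 2 * η / M +
        (2 * H / M) * ∑ m : Fin M, ∫ ω₀, ‖xbar ω₀ - x m ω₀‖ ^ 2 ∂μ₀ := by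
  set g : EuclideanSpace ℝ (Fin d) → Z → EuclideanSpace ℝ (Fin d) :=
    fun x' z => gradient (fun y => f y z) x' with hgdef
  -- The variance hypothesis carries no integrability, so square-integrability of the noise at the
  -- optimum is read off from a single slice of the square-integrable new iterate.
  have hslice := hint3.prod_right_ae
  obtain ⟨ω₁, hω₁⟩ := hslice.exists
  have hL2 : ∀ m, MemLp (g xstar) 2 (D m) := by
    intro m
    refine memLp_grad_of_memLp hH hgradmeas hsmooth hconvex (x m ω₁) xstar ?_
    refine memLp_of_integrable_sq_norm_sum (u := fun m => g (x m ω₁)) (fun m => hgradmeas _)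
      (xbar ω₁ - xstar) (c := η / M) (by positivity) ?_ m
    refine hω₁.congr (Filter.Eventually.of_forall fun zs => ?_)
    simp only [hxnext, sub_right_comm, hgdef]
  have hpt : ∀ ω₀, F (xbar ω₀) - F xstar ≤ (1 / η - lam) * ‖xbar ω₀ - xstar‖ ^ 2
      - (1 / η) * (∫ zs, ‖xnext (ω₀, zs) - xstar‖ ^ 2 ∂(Measure.pi D))
      + 3 * σs ^ 2 * η / M + (2 * H / M) * ∑ m, ‖xbar ω₀ - x m ω₀‖ ^ 2 := by
    intro ω₀
    have := step_progress_fixed hM hH hlam hη hηH hgradmeas hfint hsmooth hconvex hFm hF hswap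
      hsc hmin hL2 hvarstar (fun m => x m ω₀) (hxbar ω₀)
    simp_rw [hxnext]
    exact this
  rw [integral_prod _ hint3]
  have hi1 := hint2.const_mul (1 / η - lam)
  have hi2 := hint3.integral_prod_left.const_mul (1 / η)
  have hi3 := integrable_const (μ := μ₀) (3 * σs ^ 2 * η / M)
  have hi4 := (integrable_finsetSum Finset.univ fun m _ => hint4 m).const_mul (2 * H / M)
  calc _ ≤ ∫ ω₀, ((1 / η - lam) * ‖xbar ω₀ - xstar‖ ^ 2
      - (1 / η) * (∫ zs, ‖xnext (ω₀, zs) - xstar‖ ^ 2 ∂(Measure.pi D))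
      + 3 * σs ^ 2 * η / M + (2 * H / M) * ∑ m, ‖xbar ω₀ - x m ω₀‖ ^ 2) ∂μ₀ :=
        integral_mono (hint1.sub (integrable_const _)) (((hi1.sub hi2).add hi3).add hi4) hpt
    _ = _ := by
      refine (integral_add ((hi1.sub hi2).add hi3) hi4).trans ?_
      congr 1
      · refine (integral_add (hi1.sub hi2) hi3).trans ?_
        congr 1
        · refine (integral_sub hi1 hi2).trans ?_
          rw [integral_const_mul, integral_const_mul]
        · simp
      · rw [integral_const_mul, integral_finsetSum _ fun m _ => hint4 m]
end

section
/- Suppose each F_m is H-smooth and λ-strongly convex with λ > 0, E_{z∼D^m}‖∇f(x;z) − ∇F_m(x)‖² ≤ σ² for all x,m, and sup_x max_m ‖∇F_m(x) − ∇F(x)‖² ≤ ζ̄². Run Local SGD with K local steps per round using the decreasing stepsizes η_t = 2/(λ(a + t + 1)) for an arbitrary constant a ≥ 0 such that η_t ≤ 1/H for all t. Then at every time step t ≥ 1 (so that at most K−1 local steps have occurred since the machines' iterates were last synchronized to a common value), the machines' iterates x_t^m and their average x̄_t = (1/M)·Σ_m x_t^m satisfy (1/M)·Σ_{m=1}^M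 E‖x_t^m − x̄_t‖² ≤ 3Kσ²η_{t−1}² + 6K²ζ̄²η_{t−1}². -/
open MeasureTheory Finset
open scoped RealInnerProductSpace

/-!
Write `S t` for the averaged mean square deviation `M⁻¹ ∑ₘ 𝔼‖x_t^m - x̄_t‖²` and `k = K - 1`. It
vanishes whenever the machines have just been synchronized, and a local step gives

`S (t+1) ≤ (1 + 1/k) (1 - η_t λ) S t + K η_t² ζ² + η_t² σ²`.

* The drift part (`drift_step`) is deterministic. The map `y ↦ y - η ∇F y` contracts squared
  distances by `1 - ηλ` (`gradient_step_contraction`, from cocoercivity and strong monotonicity).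
  Comparing every `x^m - η ∇F_m (x^m)` with the image of the mean `x̄`, Young's inequality separates
  this contraction from the heterogeneity `∇F_m - ∇F`.
* The noise part (`integral_deviation_le`) is a bias-variance decomposition for fixed past iterates;
  centering the noise does not increase its total square, so it contributes at most `η² σ²`.

For `t ≥ 1` the stepsizes satisfy `(1 - η_t λ) η_{t-1}² ≤ η_t²` (`stepsize_ratio`), so the ratio
`R_j = S t / η_{t-1}²` after `j ≤ k` local steps obeys `R_{j+1} ≤ (1 + 1/k) R_j + (Kζ² + σ²)`. Hence
`R_j ≤ (Kζ² + σ²) k ((1 + 1/k)^j - 1) ≤ 2 (Kζ² + σ²) K`, as `(1 + 1/k)^k ≤ e`.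

Two measure-theoretic points need care. The gradients `∇f(x; z)` are only measurable in `z` for fixed
`x`, so the iterates need not be measurable; and a bound on a Bochner integral does not give square
integrability. Both are resolved by conditioning on the past: overwriting the samples of time `t` by
fresh ones preserves the product measure (`measurePreserving_resample`), so by Fubini it suffices to
work for almost every fixed past, where the iterates are constants and the deviations at time `t + 1`
are square integrable functions of the fresh samples. If there are at least two machines, that forces
each individual stochastic gradient to be square integrable (`memLp_two_of_deviation`).
-/

/-! ### Deterministic estimates -/

/-- The average minimizes the sum of squared distances to the points `v m`. -/
lemma sum_norm_sub_avg_sq_le {E : Type*} [NormedAddCommGroup E] [InnerProductSpace ℝ E]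
    {M : ℕ} (hM : 1 ≤ M) (v : Fin M → E) (w : E) :
    ∑ m, ‖v m - (M : ℝ)⁻¹ • ∑ n, v n‖ ^ 2 ≤ ∑ m, ‖v m - w‖ ^ 2 := by
  have hM0 : (M : ℝ) ≠ 0 := by positivity
  set b : E := (M : ℝ)⁻¹ • ∑ n, v n with hb
  have hsum : ∑ m, (v m - b) = 0 := by
    rw [Finset.sum_sub_distrib, Finset.sum_const, Finset.card_univ, Fintype.card_fin, hb,
      ← Nat.cast_smul_eq_nsmul ℝ, smul_smul, mul_inv_cancel₀ hM0, one_smul, sub_self]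
  have hsplit : ∀ m, ‖v m - w‖ ^ 2 = ‖v m - b‖ ^ 2 + 2 * ⟪v m - b, b - w⟫ + ‖b - w‖ ^ 2 := by
    intro m
    rw [← norm_add_sq_real, sub_add_sub_cancel]
  rw [Finset.sum_congr rfl fun m _ => hsplit m, Finset.sum_add_distrib, Finset.sum_add_distrib,
    ← Finset.mul_sum, ← sum_inner, hsum, inner_zero_left]
  have : 0 ≤ ∑ _m : Fin M, ‖b - w‖ ^ 2 := Finset.sum_nonneg fun _ _ => sq_nonneg _
  linarith

lemma norm_sub_sq_le_young {E : Type*} [NormedAddCommGroup E] [InnerProductSpace ℝ E]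
    {k : ℝ} (hk : 0 < k) (u v : E) :
    ‖u - v‖ ^ 2 ≤ (1 + 1 / k) * ‖u‖ ^ 2 + (1 + k) * ‖v‖ ^ 2 := by
  have h0 : 0 ≤ ‖u + k • v‖ ^ 2 / k := by positivity
  rw [norm_add_sq_real, inner_smul_right, norm_smul, Real.norm_eq_abs, abs_of_pos hk] at h0
  have h1 : (‖u‖ ^ 2 + 2 * (k * ⟪u, v⟫) + (k * ‖v‖) ^ 2) / k
      = 1 / k * ‖u‖ ^ 2 + 2 * ⟪u, v⟫ + k * ‖v‖ ^ 2 := by field_simp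
  rw [norm_sub_sq_real]
  linarith

/-- A function squeezed quadratically around an affine function has the slope of that affine
function as its gradient. -/
lemma hasGradientAt_of_abs_le {E : Type*} [NormedAddCommGroup E] [InnerProductSpace ℝ E]
    [CompleteSpace E] {F : E → ℝ} {g x : E} {C : ℝ}
    (h : ∀ y, |F y - F x - ⟪g, y - x⟫| ≤ C * ‖y - x‖ ^ 2) : HasGradientAt F g x := by
  rw [hasGradientAt_iff_isLittleO]
  have h1 : (fun y => F y - F x - ⟪g, y - x⟫) =O[nhds x] fun y => ‖y - x‖ ^ 2 :=
    Asymptotics.IsBigO.of_bound C (Filter.Eventually.of_forall fun y => by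
      simpa using h y)
  refine h1.trans_isLittleO ?_
  exact Asymptotics.isLittleO_norm_right.1 (by
    simpa using Asymptotics.isLittleO_pow_sub_sub x (by norm_num : 1 < 2))

/-- A gradient step on a smooth strongly convex function is a contraction. Only the two quadratic
bounds are used, so `G` need not be known to be the gradient of `F`. -/
lemma gradient_step_contraction {E : Type*} [NormedAddCommGroup E] [InnerProductSpace ℝ E]
    {F : E → ℝ} {G : E → E} {H lam η : ℝ} (hH : 0 < H) (hlam : 0 ≤ lam) (hη : 0 ≤ η)
    (hηH : η ≤ 1 / H)
    (hsm : ∀ x y, F y ≤ F x + ⟪G x, y - x⟫ + H / 2 * ‖x - y‖ ^ 2)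
    (hsc : ∀ x y, F y ≥ F x + ⟪G x, y - x⟫ + lam / 2 * ‖x - y‖ ^ 2) (x y : E) :
    ‖(x - η • G x) - (y - η • G y)‖ ^ 2 ≤ (1 - η * lam) * ‖x - y‖ ^ 2 := by
  -- a convex `H`-smooth function exceeds its tangent plane by at least `‖ΔG‖² / (2H)`
  have hco : ∀ x y, F x + ⟪G x, y - x⟫ + 1 / (2 * H) * ‖G y - G x‖ ^ 2 ≤ F y := by
    intro x y
    set z := y - (1 / H) • (G y - G x) with hz
    have h1 := hsc x z
    have h2 := hsm y z
    have h3 : 0 ≤ lam / 2 * ‖x - z‖ ^ 2 := by positivity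
    have e1 : z - x = (y - x) - (1 / H) • (G y - G x) := by rw [hz]; abel
    have e2 : z - y = -((1 / H) • (G y - G x)) := by rw [hz]; abel
    have e3 : y - z = (1 / H) • (G y - G x) := by rw [hz]; abel
    rw [e1, inner_sub_right, inner_smul_right] at h1
    rw [e2, e3, inner_neg_right, inner_smul_right, norm_smul, Real.norm_eq_abs,
      abs_of_pos (by positivity)] at h2
    have e4 : ⟪G y, G y - G x⟫ - ⟪G x, G y - G x⟫ = ‖G y - G x‖ ^ 2 := by
      rw [← inner_sub_left, real_inner_self_eq_norm_sq]
    have e5 : H / 2 * (1 / H * ‖G y - G x‖) ^ 2 = 1 / (2 * H) * ‖G y - G x‖ ^ 2 := by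
      field_simp
    have e6 : 1 / H * ⟪G y, G y - G x⟫ - 1 / H * ⟪G x, G y - G x⟫
      = 2 * (1 / (2 * H) * ‖G y - G x‖ ^ 2) := by
      rw [← mul_sub, e4]; field_simp
    linarith
  have hinner : ⟪G x, y - x⟫ + ⟪G y, x - y⟫ = -⟪x - y, G x - G y⟫ := by
    rw [← neg_sub x y, inner_neg_right, real_inner_comm (x - y) (G x),
      real_inner_comm (x - y) (G y), inner_sub_right]
    ring
  -- cocoercivity and strong monotonicity of the gradient
  have hc : 1 / H * ‖G x - G y‖ ^ 2 ≤ ⟪x - y, G x - G y⟫ := by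
    have h1 := hco x y
    have h2 := hco y x
    rw [norm_sub_rev] at h1
    have : 1 / H * ‖G x - G y‖ ^ 2 = 2 * (1 / (2 * H) * ‖G x - G y‖ ^ 2) := by
      field_simp
    linarith
  have hm : lam * ‖x - y‖ ^ 2 ≤ ⟪x - y, G x - G y⟫ := by
    have h1 := hsc x y
    have h2 := hsc y x
    rw [norm_sub_rev y x] at h2
    linarith
  have e : (x - η • G x) - (y - η • G y) = (x - y) - η • (G x - G y) := by
    rw [smul_sub]; abel
  rw [e, norm_sub_sq_real, inner_smul_right, norm_smul, Real.norm_eq_abs, abs_of_nonneg hη, mul_pow]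
  have h1 : η * ‖G x - G y‖ ^ 2 ≤ 1 / H * ‖G x - G y‖ ^ 2 := by gcongr
  have h2 := mul_le_mul_of_nonneg_left (h1.trans hc) hη
  have h3 := mul_le_mul_of_nonneg_left hm hη
  nlinarith

/-- One noiseless local step: the deviation from the mean contracts with factor `ρ`, up to the Young
factor `1 + 1 / k` and a heterogeneity term. -/
lemma drift_step {E : Type*} [NormedAddCommGroup E] [InnerProductSpace ℝ E]
    {M : ℕ} (hM : 1 ≤ M) {k ρ η ζ : ℝ} (hk : 0 < k)
    {G : E → E} {g : Fin M → E → E}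
    (hcontr : ∀ x y, ‖(x - η • G x) - (y - η • G y)‖ ^ 2 ≤ ρ * ‖x - y‖ ^ 2)
    (hζ : ∀ x m, ‖g m x - G x‖ ^ 2 ≤ ζ ^ 2) (x : Fin M → E) :
    (M : ℝ)⁻¹ * ∑ m, ‖(x m - η • g m (x m)) - (M : ℝ)⁻¹ • ∑ n, (x n - η • g n (x n))‖ ^ 2 ≤
      (1 + 1 / k) * ρ * ((M : ℝ)⁻¹ * ∑ m, ‖x m - (M : ℝ)⁻¹ • ∑ n, x n‖ ^ 2)
        + (1 + k) * (η ^ 2 * ζ ^ 2) := by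
  have hM0 : (M : ℝ) ≠ 0 := by positivity
  set c : E := (M : ℝ)⁻¹ • ∑ n, x n with hc
  have h1 : ∀ m, ‖(x m - η • g m (x m)) - (c - η • G c)‖ ^ 2 ≤
      (1 + 1 / k) * (ρ * ‖x m - c‖ ^ 2) + (1 + k) * (η ^ 2 * ζ ^ 2) := by
    intro m
    have e : (x m - η • g m (x m)) - (c - η • G c)
        = ((x m - η • G (x m)) - (c - η • G c)) - η • (g m (x m) - G (x m)) := by
      rw [smul_sub]; abel
    rw [e]
    refine (norm_sub_sq_le_young hk _ _).trans ?_
    rw [norm_smul, mul_pow, Real.norm_eq_abs, sq_abs]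
    have h0 := hcontr (x m) c
    have h0' := hζ (x m) m
    generalize ‖g m (x m) - G (x m)‖ ^ 2 = A at *
    gcongr
  have h2 := (sum_norm_sub_avg_sq_le hM (fun m => x m - η • g m (x m)) (c - η • G c)).trans
    (Finset.sum_le_sum fun m _ => h1 m)
  have h3 := mul_le_mul_of_nonneg_left h2 (by positivity : 0 ≤ (M : ℝ)⁻¹)
  refine h3.trans (le_of_eq ?_)
  rw [Finset.sum_add_distrib, Finset.sum_const, Finset.card_univ, Fintype.card_fin,
    ← Finset.mul_sum, ← Finset.mul_sum, nsmul_eq_mul]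
  field_simp


/-! ### Mean square deviation of independent random vectors -/

/-- If all deviations from the mean of `M ≥ 2` independent random vectors are square integrable, so
are the vectors themselves: differences `h m (u m) - h n (u n)` are square integrable, and for
independent coordinates one can freeze `u n`. -/
lemma memLp_two_of_deviation {E : Type*} [NormedAddCommGroup E] [InnerProductSpace ℝ E]
    [MeasurableSpace E] [BorelSpace E] [SecondCountableTopology E] {Z : Type*} [MeasurableSpace Z]
    {M : ℕ}
    (D : Fin M → Measure Z) [∀ m, IsProbabilityMeasure (D m)]
    {h : Fin M → Z → E} (hh : ∀ m, Measurable (h m))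
    (hint : ∀ m, Integrable (fun u : Fin M → Z =>
      ‖h m (u m) - (M : ℝ)⁻¹ • ∑ n, h n (u n)‖ ^ 2) (Measure.pi D))
    (hM2 : 2 ≤ M) (m : Fin M) : MemLp (h m) 2 (D m) := by
  have : Nontrivial (Fin M) := Fin.nontrivial_iff_two_le.2 hM2
  obtain ⟨n, hnm⟩ := exists_ne m
  have hmeas : ∀ i, Measurable fun u : Fin M → Z => h i (u i) :=
    fun i => (hh i).comp (measurable_pi_apply i)
  have hdev : ∀ i, MemLp (fun u : Fin M → Z => h i (u i) - (M : ℝ)⁻¹ • ∑ j, h j (u j)) 2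
      (Measure.pi D) := fun i =>
    (memLp_two_iff_integrable_sq_norm
      (by fun_prop : Measurable _).aestronglyMeasurable).2 (hint i)
  have hdiff : MemLp (fun u : Fin M → Z => h m (u m) - h n (u n)) 2 (Measure.pi D) := by
    convert! (hdev m).sub (hdev n) using 2
    simp
  have hmp : MeasurePreserving (fun u : Fin M → Z => (u m, u n)) (Measure.pi D)
      ((D m).prod (D n)) := by
    refine ⟨by fun_prop, ?_⟩
    have hind := (ProbabilityTheory.iIndepFun_pi (μ := D) (X := fun _ z => z)
      fun i => aemeasurable_id).indepFun hnm.symm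
    rw [ProbabilityTheory.indepFun_iff_map_prod_eq_prod_map_map (measurable_pi_apply m).aemeasurable
      (measurable_pi_apply n).aemeasurable] at hind
    rw [hind]
    exact congrArg₂ _ (measurePreserving_eval D m).map_eq (measurePreserving_eval D n).map_eq
  have hdiff' : MemLp (fun p : Z × Z => h m p.1 - h n p.2) 2 ((D m).prod (D n)) := by
    have hm1 := hh m
    have hn1 := hh n
    rw [← hmp.map_eq]
    exact (memLp_map_measure_iff (by fun_prop : Measurable _).aestronglyMeasurable
      hmp.measurable.aemeasurable).2 hdiff
  -- for almost every value `b` of the other sample, `h m - h n b` is square integrable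
  obtain ⟨b, hb⟩ := hdiff'.integrable_norm_pow (by norm_num) |>.prod_left_ae.exists
  have hb' : MemLp (fun z => h m z - h n b) 2 (D m) :=
    (memLp_two_iff_integrable_sq_norm
      ((hh m).sub measurable_const).aestronglyMeasurable).2 hb
  convert! hb'.add (memLp_const (h n b)) using 1
  ext z
  simp

lemma integral_comp_coord {Z : Type*} [MeasurableSpace Z] {M : ℕ} 
    (D : Fin M → Measure Z) [∀ m, IsProbabilityMeasure (D m)]
    {V : Type*} [NormedAddCommGroup V] [NormedSpace ℝ V] (m : Fin M) {φ : Z → V}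
    (hφ : AEStronglyMeasurable φ (D m)) :
    ∫ u : Fin M → Z, φ (u m) ∂(Measure.pi D) = ∫ z, φ z ∂(D m) := by
  have hmap := (measurePreserving_eval D m).map_eq
  rw [← hmap] at hφ
  conv_rhs => rw [← hmap]
  exact (integral_map (measurable_pi_apply m).aemeasurable hφ).symm

/-- The mean square deviation from the average is at most that of the means plus the variance. -/
lemma integral_deviation_le {E : Type*} [NormedAddCommGroup E] [InnerProductSpace ℝ E]
    [CompleteSpace E] {Z : Type*} [MeasurableSpace Z] {M : ℕ} (hM : 1 ≤ M)
    (D : Fin M → Measure Z) [∀ m, IsProbabilityMeasure (D m)]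
    {h : Fin M → Z → E} (hL : ∀ m, MemLp (h m) 2 (D m)) {s : ℝ}
    (hvar : ∀ m, ∫ z, ‖h m z - ∫ z', h m z' ∂(D m)‖ ^ 2 ∂(D m) ≤ s) :
    (M : ℝ)⁻¹ * ∑ m, ∫ u : Fin M → Z, ‖h m (u m) - (M : ℝ)⁻¹ • ∑ n, h n (u n)‖ ^ 2 ∂(Measure.pi D)
      ≤ (M : ℝ)⁻¹ * ∑ m, ‖(∫ z, h m z ∂(D m)) - (M : ℝ)⁻¹ • ∑ n, ∫ z, h n z ∂(D n)‖ ^ 2 + s := by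
  set e : Fin M → E := fun m => ∫ z, h m z ∂(D m) with he
  set W : Fin M → (Fin M → Z) → E := fun m u => h m (u m) - e m with hW
  have hWL : ∀ m, MemLp (W m) 2 (Measure.pi D) := fun m =>
    ((hL m).comp_measurePreserving (measurePreserving_eval D m)).sub (memLp_const _)
  have hWint : ∀ m, Integrable (W m) (Measure.pi D) := fun m =>
    (hWL m).integrable (by norm_num)
  have hW0 : ∀ m, ∫ u, W m u ∂(Measure.pi D) = 0 := by
    intro m
    rw [integral_comp_coord D m (φ := fun z => h m z - e m) ((hL m).1.sub aestronglyMeasurable_const),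
      integral_sub ((hL m).integrable (by norm_num)) (integrable_const _)]
    simp [he]
  have hVL : ∀ m, MemLp (fun u => W m u - (M : ℝ)⁻¹ • ∑ n, W n u) 2 (Measure.pi D) := fun m =>
    (hWL m).sub ((memLp_finsetSum _ fun n _ => hWL n).const_smul _)
  have hV0 : ∀ m, ∫ u, (W m u - (M : ℝ)⁻¹ • ∑ n, W n u) ∂(Measure.pi D) = 0 := by
    intro m
    have hi : Integrable (fun u => (M : ℝ)⁻¹ • ∑ n, W n u) (Measure.pi D) :=
      (integrable_finsetSum _ fun n _ => hWint n).smul _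
    rw [integral_sub (hWint m) hi, integral_smul, integral_finsetSum _ fun n _ => hWint n]
    simp [hW0]
  -- bias-variance decomposition of each deviation
  have hbv : ∀ m, ∫ u : Fin M → Z, ‖h m (u m) - (M : ℝ)⁻¹ • ∑ n, h n (u n)‖ ^ 2 ∂(Measure.pi D)
      = ‖e m - (M : ℝ)⁻¹ • ∑ n, e n‖ ^ 2
        + ∫ u, ‖W m u - (M : ℝ)⁻¹ • ∑ n, W n u‖ ^ 2 ∂(Measure.pi D) := by
    intro m
    have e1 : ∀ u : Fin M → Z, ‖h m (u m) - (M : ℝ)⁻¹ • ∑ n, h n (u n)‖ ^ 2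
        = ‖e m - (M : ℝ)⁻¹ • ∑ n, e n‖ ^ 2
          + 2 * ⟪e m - (M : ℝ)⁻¹ • ∑ n, e n, W m u - (M : ℝ)⁻¹ • ∑ n, W n u⟫
          + ‖W m u - (M : ℝ)⁻¹ • ∑ n, W n u‖ ^ 2 := by
      intro u
      rw [← norm_add_sq_real]
      congr 2
      simp only [hW, Finset.sum_sub_distrib, smul_sub]
      abel
    have hVi := (hVL m).integrable (by norm_num)
    have hi := (hVi.const_inner (𝕜 := ℝ) (e m - (M : ℝ)⁻¹ • ∑ n, e n)).const_mul 2
    simp_rw [e1]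
    have hc : Integrable (fun _ : Fin M → Z => ‖e m - (M : ℝ)⁻¹ • ∑ n, e n‖ ^ 2) (Measure.pi D) :=
      integrable_const _
    have hci : Integrable (fun u => ‖e m - (M : ℝ)⁻¹ • ∑ n, e n‖ ^ 2
        + 2 * ⟪e m - (M : ℝ)⁻¹ • ∑ n, e n, W m u - (M : ℝ)⁻¹ • ∑ n, W n u⟫) (Measure.pi D) :=
      hc.add hi
    rw [integral_add hci ((hVL m).integrable_norm_pow (by norm_num)), integral_add hc hi, integral_const_mul, integral_inner hVi, hV0]
    simp
  have hsum : ∑ m, ∫ u, ‖W m u - (M : ℝ)⁻¹ • ∑ n, W n u‖ ^ 2 ∂(Measure.pi D) ≤ M * s := by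
    calc _ = ∫ u, ∑ m, ‖W m u - (M : ℝ)⁻¹ • ∑ n, W n u‖ ^ 2 ∂(Measure.pi D) :=
          (integral_finsetSum _ fun m _ => (hVL m).integrable_norm_pow (by norm_num)).symm
      _ ≤ ∫ u, ∑ m, ‖W m u‖ ^ 2 ∂(Measure.pi D) := by
          refine integral_mono
            (integrable_finsetSum _ fun m _ => (hVL m).integrable_norm_pow (by norm_num))
            (integrable_finsetSum _ fun m _ => (hWL m).integrable_norm_pow (by norm_num)) fun u => ?_
          simpa using sum_norm_sub_avg_sq_le hM (fun m => W m u) 0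
      _ = ∑ m, ∫ u, ‖W m u‖ ^ 2 ∂(Measure.pi D) :=
          integral_finsetSum _ fun m _ => (hWL m).integrable_norm_pow (by norm_num)
      _ ≤ ∑ _m : Fin M, s := by
          refine Finset.sum_le_sum fun m _ => ?_
          refine (integral_comp_coord D m (φ := fun z => ‖h m z - e m‖ ^ 2)
            (((hL m).1.sub aestronglyMeasurable_const).norm.pow 2)).trans_le ?_
          exact hvar m
      _ = M * s := by simp
  rw [Finset.sum_congr rfl fun m _ => hbv m, Finset.sum_add_distrib, mul_add]
  have hM0 : (0 : ℝ) < M := by positivity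
  have : (M : ℝ)⁻¹ * (M * s) = s := by field_simp
  have := mul_le_mul_of_nonneg_left hsum (inv_nonneg.2 hM0.le)
  linarith

/-- Overwrite the time-`t` samples of `p.1` (one per machine) by the fresh samples `p.2`. -/
def resample {Z : Type*} {T M : ℕ} (t : Fin T) (p : ((Fin T × Fin M) → Z) × (Fin M → Z)) :
    (Fin T × Fin M) → Z :=
  fun i => if i.1 = t then p.2 i.2 else p.1 i

/-- Fresh independent time-`t` samples do not change the joint law. This is what allows conditioning
on the past with the whole sample space playing the role of the past. -/
lemma measurePreserving_resample {Z : Type*} [MeasurableSpace Z] {T M : ℕ}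
    (D : Fin M → Measure Z)
    [∀ m, IsProbabilityMeasure (D m)] (t : Fin T) :
    MeasurePreserving (resample (Z := Z) (M := M) t)
      ((Measure.pi fun i : Fin T × Fin M => D i.2).prod (Measure.pi D))
      (Measure.pi fun i : Fin T × Fin M => D i.2) := by
  have hmeas : Measurable (resample (Z := Z) (M := M) t) := by
    refine measurable_pi_lambda _ fun i => ?_
    unfold resample
    split_ifs
    · exact (measurable_pi_apply _).comp measurable_snd
    · exact (measurable_pi_apply _).comp measurable_fst
  refine ⟨hmeas, (Measure.pi_eq fun s hs => ?_).symm⟩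
  rw [Measure.map_apply hmeas (MeasurableSet.univ_pi hs)]
  have hpre : resample (Z := Z) (M := M) t ⁻¹' (Set.univ.pi s)
      = (Set.univ.pi fun i : Fin T × Fin M => if i.1 = t then Set.univ else s i) ×ˢ
        (Set.univ.pi fun m => s (t, m)) := by
    ext p
    simp only [Set.mem_preimage, Set.mem_pi, Set.mem_univ, true_imp_iff, Set.mem_prod, resample]
    constructor
    · intro h
      refine ⟨fun i => ?_, fun m => by simpa using h (t, m)⟩
      by_cases hi : i.1 = t
      · simp [hi]
      · simpa [hi] using h i
    · rintro ⟨h1, h2⟩ i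
      by_cases hi : i.1 = t
      · obtain ⟨i1, i2⟩ := i
        obtain rfl : i1 = t := hi
        simpa using h2 i2
      · simpa [hi] using h1 i
  rw [hpre, Measure.prod_prod, Measure.pi_pi, Measure.pi_pi, Fintype.prod_prod_type,
    Fintype.prod_prod_type]
  rw [← Finset.mul_prod_erase Finset.univ
      (fun t' => ∏ m, D m (s (t', m))) (Finset.mem_univ t),
    ← Finset.mul_prod_erase Finset.univ _ (Finset.mem_univ t)]
  rw [mul_comm]
  congr 1
  simp only [if_true, measure_univ, Finset.prod_const_one, one_mul]
  refine Finset.prod_congr rfl fun t' ht' => ?_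
  simp [Finset.ne_of_mem_erase ht']

/-! ### One local step in expectation -/

/-- One local step in expectation. The iterates `x` must not depend on the time-`t` samples
(`hpast`), but need not be measurable: only their squared deviations are assumed integrable. -/
lemma deviation_step {E : Type*} [NormedAddCommGroup E] [InnerProductSpace ℝ E] [CompleteSpace E]
    [MeasurableSpace E] [BorelSpace E] [SecondCountableTopology E] {Z : Type*} [MeasurableSpace Z]
    {T M : ℕ} (hM2 : 2 ≤ M)
    (D : Fin M → Measure Z) [∀ m, IsProbabilityMeasure (D m)]
    {g : E → Z → E} {gm : Fin M → E → E} {G : E → E} {k ρ η σ ζ : ℝ} (hk : 0 < k)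
    (hg : ∀ x, Measurable (g x))
    (hgm : ∀ m x, gm m x = ∫ z, g x z ∂(D m))
    (hvar : ∀ x m, ∫ z, ‖g x z - gm m x‖ ^ 2 ∂(D m) ≤ σ ^ 2)
    (hcontr : ∀ x y, ‖(x - η • G x) - (y - η • G y)‖ ^ 2 ≤ ρ * ‖x - y‖ ^ 2)
    (hζ : ∀ x m, ‖gm m x - G x‖ ^ 2 ≤ ζ ^ 2)
    (t : Fin T) {x y : Fin M → ((Fin T × Fin M) → Z) → E} (hη : η ≠ 0)
    (hpast : ∀ m ω u, x m (resample t (ω, u)) = x m ω)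
    (hy : ∀ m ω, y m ω = x m ω - η • g (x m ω) (ω (t, m)))
    {μ : Measure ((Fin T × Fin M) → Z)}
    (hμ : μ = Measure.pi fun i : Fin T × Fin M => D i.2)
    (hxint : ∀ m, Integrable (fun ω => ‖x m ω - (M : ℝ)⁻¹ • ∑ n, x n ω‖ ^ 2) μ)
    (hyint : ∀ m, Integrable (fun ω => ‖y m ω - (M : ℝ)⁻¹ • ∑ n, y n ω‖ ^ 2) μ) :
    (M : ℝ)⁻¹ * ∑ m, ∫ ω, ‖y m ω - (M : ℝ)⁻¹ • ∑ n, y n ω‖ ^ 2 ∂μ ≤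
      (1 + 1 / k) * ρ * ((M : ℝ)⁻¹ * ∑ m, ∫ ω, ‖x m ω - (M : ℝ)⁻¹ • ∑ n, x n ω‖ ^ 2 ∂μ)
        + ((1 + k) * (η ^ 2 * ζ ^ 2) + η ^ 2 * σ ^ 2) := by
  subst hμ
  have hM : 1 ≤ M := by omega
  set μ := Measure.pi fun i : Fin T × Fin M => D i.2
  have hmp : MeasurePreserving (resample t) (μ.prod (Measure.pi D)) μ :=
    measurePreserving_resample D t
  have hy' : ∀ m ω u, y m (resample t (ω, u)) = x m ω - η • g (x m ω) (u m) := by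
    intro m ω u
    rw [hy, hpast]
    simp [resample]
  have hyint' : ∀ m, Integrable (fun p : ((Fin T × Fin M) → Z) × (Fin M → Z) =>
      ‖(x m p.1 - η • g (x m p.1) (p.2 m)) -
        (M : ℝ)⁻¹ • ∑ n, (x n p.1 - η • g (x n p.1) (p.2 n))‖ ^ 2) (μ.prod (Measure.pi D)) := by
    intro m
    have := hmp.integrable_comp_of_integrable (hyint m)
    simpa only [Function.comp_def, ← hy', Prod.mk.eta] using this
  have hfub : ∀ m, ∫ ω, ‖y m ω - (M : ℝ)⁻¹ • ∑ n, y n ω‖ ^ 2 ∂μ =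
      ∫ ω, ∫ u, ‖(x m ω - η • g (x m ω) (u m)) -
        (M : ℝ)⁻¹ • ∑ n, (x n ω - η • g (x n ω) (u n))‖ ^ 2 ∂(Measure.pi D) ∂μ := by
    intro m
    have h1 := (hyint m).aestronglyMeasurable
    rw [← integral_prod _ (hyint' m)]
    conv_lhs => rw [← hmp.map_eq]
    rw [← hmp.map_eq] at h1
    rw [integral_map hmp.measurable.aemeasurable h1]
    simp only [← hy', Prod.mk.eta]
  -- the conditional one-step estimate, for almost every fixed past `ω`
  have hcond : ∀ᵐ ω ∂μ, (M : ℝ)⁻¹ * ∑ m, ∫ u, ‖(x m ω - η • g (x m ω) (u m)) -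
        (M : ℝ)⁻¹ • ∑ n, (x n ω - η • g (x n ω) (u n))‖ ^ 2 ∂(Measure.pi D) ≤
      (1 + 1 / k) * ρ * ((M : ℝ)⁻¹ * ∑ m, ‖x m ω - (M : ℝ)⁻¹ • ∑ n, x n ω‖ ^ 2)
        + ((1 + k) * (η ^ 2 * ζ ^ 2) + η ^ 2 * σ ^ 2) := by
    filter_upwards [ae_all_iff.2 fun m => (hyint' m).prod_right_ae] with ω hω
    have hhm : ∀ m, Measurable fun z => x m ω - η • g (x m ω) z := fun m =>
      measurable_const.sub ((hg _).const_smul η)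
    have hL := memLp_two_of_deviation D hhm hω hM2
    have hgi : ∀ m, Integrable (fun z => g (x m ω) z) (D m) := by
      intro m
      have h1 := (((integrable_const (x m ω)).sub ((hL m).integrable (by norm_num))).smul η⁻¹)
      refine h1.congr (Filter.Eventually.of_forall fun z => ?_)
      simp [smul_smul, hη]
    have hmean : ∀ m, ∫ z, (x m ω - η • g (x m ω) z) ∂(D m)
        = x m ω - η • gm m (x m ω) := by
      intro m
      have hi : Integrable (fun z => η • g (x m ω) z) (D m) := (hgi m).smul η
      rw [integral_sub (integrable_const _) hi, integral_smul, ← hgm]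
      simp
    refine (integral_deviation_le hM D hL (s := η ^ 2 * σ ^ 2) fun m => ?_).trans ?_
    · rw [hmean]
      have e : ∀ z, ‖(x m ω - η • g (x m ω) z) - (x m ω - η • gm m (x m ω))‖ ^ 2
          = η ^ 2 * ‖g (x m ω) z - gm m (x m ω)‖ ^ 2 := by
        intro z
        rw [sub_sub_sub_cancel_left, ← smul_sub, norm_smul, mul_pow, Real.norm_eq_abs, sq_abs,
          norm_sub_rev]
      simp_rw [e]
      rw [integral_const_mul]
      exact mul_le_mul_of_nonneg_left (hvar _ _) (sq_nonneg _)
    · simp_rw [hmean]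
      have := drift_step hM hk hcontr hζ fun m => x m ω
      linarith
  have hi2 := (((integrable_finsetSum univ fun m _ => hxint m).const_mul (M : ℝ)⁻¹).const_mul
    ((1 + 1 / k) * ρ))
  have hmono := integral_mono_ae
    ((integrable_finsetSum univ fun m _ => (hyint' m).integral_prod_left).const_mul (M : ℝ)⁻¹)
    (hi2.add (integrable_const ((1 + k) * (η ^ 2 * ζ ^ 2) + η ^ 2 * σ ^ 2))) hcond
  rw [integral_const_mul, integral_finsetSum _ fun m _ => (hyint' m).integral_prod_left] at hmono
  simp_rw [hfub]
  refine hmono.trans (le_of_eq ?_)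
  simp only [Pi.add_apply]
  rw [integral_add hi2 (integrable_const _), integral_const_mul, integral_const_mul,
    integral_finsetSum _ fun m _ => hxint m]
  simp

/-! ### The stepsize recursion -/

/-- Uses `(1 + 1 / k) ^ k ≤ e ≤ 3`. For `k = 0` both sides vanish. -/
lemma geometric_growth_le {k j : ℕ} (hj : j ≤ k) {c : ℝ} (hc : 0 ≤ c) :
    c * k * ((1 + 1 / (k : ℝ)) ^ j - 1) ≤ 2 * c * k := by
  have h1 : (1 + 1 / (k : ℝ)) ^ j ≤ 3 := by
    rcases Nat.eq_zero_or_pos k with rfl | hk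
    · obtain rfl : j = 0 := by omega
      norm_num
    have hk' : (0 : ℝ) < k := by exact_mod_cast hk
    calc (1 + 1 / (k : ℝ)) ^ j ≤ (1 + 1 / (k : ℝ)) ^ k :=
          pow_le_pow_right₀ (by simp) hj
      _ ≤ (Real.exp (1 / k)) ^ k := by
          gcongr
          linarith [Real.add_one_le_exp (1 / (k : ℝ))]
      _ = Real.exp 1 := by
          rw [← Real.exp_nat_mul]; congr 1; field_simp
      _ ≤ 3 := by linarith [Real.exp_one_lt_d9]
  have : 0 ≤ c * k := by positivity
  nlinarith

/-- With `p = a + t`, the inequality amounts to `(p - 1) (p + 1) ≤ p ^ 2`. -/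
lemma stepsize_ratio {lam a : ℝ} (hlam : 0 < lam) (ha : 0 ≤ a) {η : ℕ → ℝ}
    (hη : ∀ t : ℕ, η t = 2 / (lam * (a + t + 1))) {t : ℕ} (ht : 1 ≤ t) :
    0 ≤ 1 - η t * lam ∧ (1 - η t * lam) * η (t - 1) ^ 2 ≤ η t ^ 2 := by
  obtain ⟨s, rfl⟩ : ∃ s, t = s + 1 := ⟨t - 1, by omega⟩
  rw [Nat.add_sub_cancel, hη, hη]
  push_cast
  set p : ℝ := a + s + 1 with hp
  have hs : (0 : ℝ) ≤ s := Nat.cast_nonneg s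
  have hp1 : 1 ≤ p := by linarith
  have e : a + (s + 1) + 1 = p + 1 := by rw [hp]; ring
  rw [e]
  have e1 : 1 - 2 / (lam * (p + 1)) * lam = (p - 1) / (p + 1) := by
    field_simp; ring
  rw [e1]
  refine ⟨div_nonneg (by linarith) (by linarith), ?_⟩
  rw [div_pow, div_pow, div_mul_div_comm, div_le_div_iff₀ (by positivity) (by positivity)]
  have : 0 ≤ lam ^ 2 * (p + 1) := by positivity
  nlinarith

/-- Divergence bound for Local SGD with the decreasing stepsizes
`η_t = 2/(λ(a+t+1))` (for arbitrary `a ≥ 0`, provided `η_t ≤ 1/H` for all `t`): at every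
time step `t ≥ 1`, `(1/M) Σ_m 𝔼‖x_t^m - x̄_t‖² ≤ 3Kσ²η_{t-1}² + 6K²ζ̄²η_{t-1}²`. -/
theorem local_sgd_divergence_bound_decreasing_stepsize
    (d M K T : ℕ) (hM : 1 ≤ M) (hK : 1 ≤ K)
    (H lam σ ζ : ℝ) (hH : 0 < H) (hlam : 0 < lam) (hσ : 0 ≤ σ) (hζ : 0 ≤ ζ)
    (Z : Type*) [MeasurableSpace Z]
    (D : Fin M → Measure Z) [∀ m, IsProbabilityMeasure (D m)]
    (f : EuclideanSpace ℝ (Fin d) → Z → ℝ)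
    (hgradmeas : ∀ x' : EuclideanSpace ℝ (Fin d),
      Measurable fun z => gradient (fun y => f y z) x')
    (hfint : ∀ (m : Fin M) (x' : EuclideanSpace ℝ (Fin d)), Integrable (fun z => f x' z) (D m))
    (Fm : Fin M → EuclideanSpace ℝ (Fin d) → ℝ)
    (hFm : ∀ m x', Fm m x' = ∫ z, f x' z ∂(D m))
    (F : EuclideanSpace ℝ (Fin d) → ℝ)
    (hF : ∀ x', F x' = (M : ℝ)⁻¹ * ∑ m : Fin M, Fm m x')
    -- each `F_m` is `H`-smooth and `λ`-strongly convex
    (hsmooth : ∀ (m : Fin M) (x' y : EuclideanSpace ℝ (Fin d)),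
      Fm m y ≤ Fm m x' + ⟪gradient (Fm m) x', y - x'⟫ + H / 2 * ‖x' - y‖ ^ 2)
    (hsc : ∀ (m : Fin M) (x' y : EuclideanSpace ℝ (Fin d)),
      Fm m y ≥ Fm m x' + ⟪gradient (Fm m) x', y - x'⟫ + lam / 2 * ‖x' - y‖ ^ 2)
    -- uniform variance bound and uniform heterogeneity bound
    (hvar : ∀ (x' : EuclideanSpace ℝ (Fin d)) (m : Fin M),
      ∫ z, ‖gradient (fun y => f y z) x' - gradient (Fm m) x'‖ ^ 2 ∂(D m) ≤ σ ^ 2)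
    (hζbar : ∀ (x' : EuclideanSpace ℝ (Fin d)) (m : Fin M),
      ‖gradient (Fm m) x' - gradient F x'‖ ^ 2 ≤ ζ ^ 2)
    (hswap : ∀ (m : Fin M) (x' : EuclideanSpace ℝ (Fin d)),
      gradient (Fm m) x' = ∫ z, gradient (fun y => f y z) x' ∂(D m))
    -- the decreasing stepsizes
    (a : ℝ) (ha : 0 ≤ a)
    (η : ℕ → ℝ) (hη : ∀ t : ℕ, η t = 2 / (lam * (a + t + 1)))
    (hηH : ∀ t : ℕ, η t ≤ 1 / H)
    -- the Local SGD iterates, synchronized whenever `t` is a multiple of `K`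
    (μΩ : Measure ((Fin T × Fin M) → Z))
    (hμΩ : μΩ = Measure.pi fun i : Fin T × Fin M => D i.2)
    (x : ℕ → Fin M → ((Fin T × Fin M) → Z) → EuclideanSpace ℝ (Fin d))
    (hx0 : ∀ m ω, x 0 m ω = 0)
    (hxrec : ∀ (t : Fin T) (m : Fin M) (ω : (Fin T × Fin M) → Z),
      x ((t : ℕ) + 1) m ω =
        if K ∣ ((t : ℕ) + 1) then
          (M : ℝ)⁻¹ • ∑ n : Fin M, (x (t : ℕ) n ω -
            η (t : ℕ) • gradient (fun y => f y (ω (t, n))) (x (t : ℕ) n ω))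
        else x (t : ℕ) m ω -
          η (t : ℕ) • gradient (fun y => f y (ω (t, m))) (x (t : ℕ) m ω))
    (hsqint : ∀ (t : ℕ) (m : Fin M),
      Integrable (fun ω => ‖x t m ω - (M : ℝ)⁻¹ • ∑ n : Fin M, x t n ω‖ ^ 2) μΩ) :
    ∀ t : ℕ, 1 ≤ t → t ≤ T →
      (M : ℝ)⁻¹ * ∑ m : Fin M,
          ∫ ω, ‖x t m ω - (M : ℝ)⁻¹ • ∑ n : Fin M, x t n ω‖ ^ 2 ∂μΩ ≤
        3 * K * σ ^ 2 * (η (t - 1)) ^ 2 + 6 * K ^ 2 * ζ ^ 2 * (η (t - 1)) ^ 2 := by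
  have hM0 : (M : ℝ) ≠ 0 := by positivity
  have hηpos : ∀ t, 0 < η t := fun t => by
    rw [hη]; positivity
  set k : ℕ := K - 1 with hk
  have hKk : (K : ℝ) = k + 1 := by
    have : K = k + 1 := by omega
    exact_mod_cast this
  set c : ℝ := K * ζ ^ 2 + σ ^ 2 with hc
  have hc0 : 0 ≤ c := by positivity
  set S : ℕ → ℝ := fun t => (M : ℝ)⁻¹ * ∑ m : Fin M,
    ∫ ω, ‖x t m ω - (M : ℝ)⁻¹ • ∑ n : Fin M, x t n ω‖ ^ 2 ∂μΩ with hS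
  have havg : ∀ v : EuclideanSpace ℝ (Fin d), (M : ℝ)⁻¹ • ∑ _n : Fin M, v = v := by
    intro v
    rw [Finset.sum_const, Finset.card_univ, Fintype.card_fin, ← Nat.cast_smul_eq_nsmul ℝ,
      smul_smul, inv_mul_cancel₀ hM0, one_smul]
  have hsync : ∀ t ≤ T, K ∣ t → S t = 0 := by
    intro t ht hdvd
    have : ∃ v : ((Fin T × Fin M) → Z) → EuclideanSpace ℝ (Fin d), ∀ m ω, x t m ω = v ω := by
      rcases t with _ | t
      · exact ⟨fun _ => 0, hx0⟩
      · exact ⟨_, fun m ω => (hxrec ⟨t, by omega⟩ m ω).trans (if_pos hdvd)⟩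
    obtain ⟨v, hv⟩ := this
    simp only [hS, hv, havg, sub_self]
    simp
  -- smoothness and strong convexity pass to the average `F`, with the averaged gradient
  set G : EuclideanSpace ℝ (Fin d) → EuclideanSpace ℝ (Fin d) :=
    fun y => (M : ℝ)⁻¹ • ∑ m, gradient (Fm m) y with hG
  have hinner : ∀ x' y, ⟪G x', y - x'⟫ = (M : ℝ)⁻¹ * ∑ m, ⟪gradient (Fm m) x', y - x'⟫ := by
    intro x' y
    rw [hG, real_inner_smul_left, sum_inner]
  have hconst : ∀ r : ℝ, (M : ℝ)⁻¹ * ∑ _m : Fin M, r = r := by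
    intro r
    simp [hM0]
  have hFsm : ∀ x' y, F y ≤ F x' + ⟪G x', y - x'⟫ + H / 2 * ‖x' - y‖ ^ 2 := by
    intro x' y
    rw [hF, hF, hinner, ← hconst (H / 2 * ‖x' - y‖ ^ 2), ← mul_add, ← mul_add,
      ← Finset.sum_add_distrib, ← Finset.sum_add_distrib]
    gcongr with m
    exact hsmooth m x' y
  have hFsc : ∀ x' y, F y ≥ F x' + ⟪G x', y - x'⟫ + lam / 2 * ‖x' - y‖ ^ 2 := by
    intro x' y
    rw [ge_iff_le, hF, hF, hinner, ← hconst (lam / 2 * ‖x' - y‖ ^ 2), ← mul_add, ← mul_add,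
      ← Finset.sum_add_distrib, ← Finset.sum_add_distrib]
    gcongr with m
    exact hsc m x' y
  have hgradF : ∀ y, gradient F y = G y := by
    intro x'
    refine (hasGradientAt_of_abs_le (C := H / 2) fun y => ?_).gradient
    have h1 := hFsm x' y
    have h2 := hFsc x' y
    have h3 : 0 ≤ lam / 2 * ‖x' - y‖ ^ 2 := by positivity
    rw [norm_sub_rev y x', abs_of_nonneg (by linarith)]
    linarith
  have hζ' : ∀ y m, ‖gradient (Fm m) y - G y‖ ^ 2 ≤ ζ ^ 2 := fun y m => hgradF y ▸ hζbar y m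
  -- the iterates up to time `t` do not depend on the samples drawn at time `t`
  have hpast : ∀ (t : Fin T) (s : ℕ), s ≤ t → ∀ m ω u, x s m (resample t (ω, u)) = x s m ω := by
    intro t s
    induction s with
    | zero => intro _ m ω u; rw [hx0, hx0]
    | succ s ih =>
      intro hs m ω u
      have hst : s < T := by omega
      have hne : (⟨s, hst⟩ : Fin T) ≠ t := by
        intro h
        have := congrArg Fin.val h
        simp only at this
        omega
      have h1 := hxrec ⟨s, hst⟩ m (resample t (ω, u))
      have h2 := hxrec ⟨s, hst⟩ m ω
      simp only [ih (by omega), resample, hne, if_false] at h1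
      rw [h2, ← h1]
  have hstep : ∀ t < T, ¬ K ∣ t + 1 → 2 ≤ M → 1 ≤ k →
      S (t + 1) ≤ (1 + 1 / (k : ℝ)) * (1 - η t * lam) * S t + c * η t ^ 2 := by
    intro t ht hdvd hM2 hk1
    have := deviation_step (k := k) (ρ := 1 - η t * lam) (η := η t) (σ := σ) (ζ := ζ) hM2 D
      (by exact_mod_cast hk1) hgradmeas hswap hvar
      (gradient_step_contraction hH hlam.le (hηpos t).le (hηH t) hFsm hFsc) hζ'
      ⟨t, ht⟩ (x := x t) (y := x (t + 1)) (hηpos t).ne' (hpast ⟨t, ht⟩ t le_rfl)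
      (fun m ω => (hxrec ⟨t, ht⟩ m ω).trans (if_neg hdvd)) hμΩ (hsqint t) (hsqint (t + 1))
    refine this.trans (le_of_eq ?_)
    rw [hc, hKk]
    ring
  -- growth within the communication round that starts at time `q * K`
  have hmain : ∀ q j : ℕ, j ≤ k → q * K + j ≤ T → 2 ≤ M →
      S (q * K + j) ≤ c * k * ((1 + 1 / (k : ℝ)) ^ j - 1) * η (q * K + j - 1) ^ 2 := by
    intro q j
    induction j with
    | zero =>
      intro _ hT _
      rw [hsync _ hT (by simp)]
      simp
    | succ j ih =>
      intro hj hT hM2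
      have hk1 : 1 ≤ k := by omega
      have hk' : (0 : ℝ) < k := by exact_mod_cast hk1
      have hdvd : ¬ K ∣ q * K + j + 1 := by
        rw [add_assoc, Nat.dvd_add_right (Dvd.intro_left q rfl)]
        exact Nat.not_dvd_of_pos_of_lt (by omega) (by omega)
      have h1 := hstep (q * K + j) (by omega) hdvd hM2 hk1
      have h2 := ih (by omega) (by omega) hM2
      set t := q * K + j with ht
      have e : q * K + (j + 1) = t + 1 := by omega
      rw [e, Nat.add_sub_cancel]
      set R : ℝ := c * k * ((1 + 1 / (k : ℝ)) ^ j - 1) with hR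
      have hR0 : 0 ≤ R := by
        have : 1 ≤ (1 + 1 / (k : ℝ)) ^ j := one_le_pow₀ (by simp)
        have := sub_nonneg.2 this
        positivity
      have h3 : (1 - η t * lam) * S t ≤ R * η t ^ 2 := by
        -- at `t = 0` the index `t - 1` truncates, but there `S` vanishes
        rcases Nat.eq_zero_or_pos t with h0 | hpos
        · rw [hsync t (by omega) (by simp [h0]), mul_zero]
          positivity
        · obtain ⟨h4, h5⟩ := stepsize_ratio hlam ha hη hpos
          calc _ ≤ (1 - η t * lam) * (R * η (t - 1) ^ 2) := by gcongr
            _ = R * ((1 - η t * lam) * η (t - 1) ^ 2) := by ring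
            _ ≤ R * η t ^ 2 := by gcongr
      calc S (t + 1) ≤ (1 + 1 / (k : ℝ)) * ((1 - η t * lam) * S t) + c * η t ^ 2 := by
            linarith
        _ ≤ (1 + 1 / (k : ℝ)) * (R * η t ^ 2) + c * η t ^ 2 := by gcongr
        _ = _ := by
            rw [hR, pow_succ _ j]
            generalize (1 + 1 / (k : ℝ)) ^ j = A
            field_simp
            ring
  intro t _ htT
  change S t ≤ _
  rcases Nat.lt_or_ge M 2 with hM1 | hM2
  -- a single machine never deviates from the average
  · obtain rfl : M = 1 := by omega
    have : S t = 0 := by simp [hS]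
    rw [this]
    positivity
  have hmod : t / K * K + t % K = t := Nat.div_add_mod' t K
  have hlt : t % K ≤ k := by have := Nat.mod_lt t (by omega : K > 0); omega
  have h1 := hmain (t / K) (t % K) hlt (by omega) hM2
  rw [hmod] at h1
  refine h1.trans ?_
  rw [← add_mul]
  gcongr
  refine (geometric_growth_le hlt hc0).trans ?_
  have hkK : (k : ℝ) ≤ K := by linarith
  calc 2 * c * k ≤ 2 * c * K := by gcongr
    _ ≤ _ := by
      rw [hc]
      have h1 : 0 ≤ (K : ℝ) * σ ^ 2 := by positivity
      have h2 : 0 ≤ (K : ℝ) ^ 2 * ζ ^ 2 := by positivity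
      linarith
end
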